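/- Levi-type ıSchur duality, second half (Theorem 3.7 = thm: main thm2): an operator A ∈ End_K(V̄^⊗m) commutes with every element of Φ(L_q^ı) if and only if A lies in the image Ξ(𝓗_m) of the duplex Hecke algebra. In other words, Ξ(𝓗_m) = End_{Φ(L_q^ı)}(V̄^⊗m) (the opposite algebra identification being the usual one for the anti-homomorphism Ξ). -/

import Mathlib

/-!
The image of `Ξ` is generated, as an algebra, by the operators `Ψ(H_i)` and the projections `p_l`
onto `V^{⊗l} ⊗ η_{r+3/2}^{⊗(m-l)}`: the relations defining `Ξ` say that `Ξ(x_σ^(l))` is `Ψ(H_σ) p_l`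
(`matE_Xg`).

Commutation of these generators with `Φ(L_q^ı)` is a computation on one or two tensor factors
(`RopN_comm_Levi`) together with the remark that the generators of `Φ(L_q^ı)` never mix `V` with
`η_{±(r+3/2)}` (`BlockPres.commute_PM`).

For the converse inclusion let `S` be the algebra generated by the `Ψ(H_i)` and the `p_l`. The main
point is that the commutant of `S` is contained in `Φ(L_q^ı)` (`commutant_genS`). It is proved by
specialization to `q = 1`. A matrix commuting with `S` can be scaled so as to be regular at `q = 1`;
its value there then commutes with the signed permutations of the tensor factors and with the block
projections. By a polarization argument (`classical_mem`) all such rational matrices are generated by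
`x ↦ ∑ 1 ⊗ ⋯ ⊗ x ⊗ ⋯ ⊗ 1` for the matrices `x` which preserve the blocks and are invariant under
`η_j ↦ η_{-j}`, and these are values at `q = 1` of elements of `Φ(L_q^ı)` (`mem_valPhi`). The algebra
`Φ(L_q^ı)` thus contains, after specialization, the whole specialized commutant, and a Nakayama type
argument lifts the inclusion to `ℚ(q)` (`commutant_le_of_specialization`).

Finally `S` equals its bicommutant. All its generators have symmetric matrices, so `S` is stable
under transposition; since `ℚ(q)` is formally real, orthogonal complements for the standard bilinear
form are genuine complements, and the classical proof of the double commutant theorem applies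
(`mem_of_mem_bicommutant`). An operator commuting with `Φ(L_q^ı)` commutes with the commutant of `S`,
hence lies in `S`.
-/

noncomputable section

open scoped BigOperators

set_option maxHeartbeats 1000000
set_option synthInstance.maxHeartbeats 400000

/-- The field `ℚ(q)`. -/
abbrev Kq : Type := RatFunc ℚ

/-- The element `q`, transcendental over `ℚ`. -/
def qv : Kq := RatFunc.X

/-- Index set `𝕀(2r+4)`: the `j`-th element represents the half-integer `j - r - 3/2`. -/
abbrev Idx (r : ℕ) := Fin (2*r+4)

/-- The space `V̄`, with basis `η_j` indexed by `𝕀(2r+4)` (coordinate form). -/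
abbrev Vb (r : ℕ) := Idx r → Kq

/-- The tensor power `V̄^⊗m` (coordinates with respect to the basis `M_f`). -/
abbrev TP (r m : ℕ) := (Fin m → Idx r) → Kq

/-- Basis vector `M_f = η_{f 0} ⊗ ⋯ ⊗ η_{f (m-1)}`. -/
def Mf {r m : ℕ} (f : Fin m → Idx r) : TP r m := Pi.single f 1

/-- For a quantum-group index `a : Fin (2r+3)` (representing `i = a - r - 1 ∈ [-r-1, r+1]`),
the index of `η_{i - 1/2}`. -/
def loI {r : ℕ} (a : Fin (2*r+3)) : Idx r := ⟨a.1, by have := a.2; omega⟩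

/-- The index of `η_{i + 1/2}`. -/
def hiI {r : ℕ} (a : Fin (2*r+3)) : Idx r := ⟨a.1+1, by have := a.2; omega⟩

/-- The index of `η_{-r-3/2}`. -/
def botI (r : ℕ) : Idx r := ⟨0, by omega⟩

/-- The index of `η_{r+3/2}`. -/
def topI (r : ℕ) : Idx r := ⟨2*r+3, by omega⟩

/-- A linear endomorphism of `V̄` of the shape `v ↦ (j ↦ c j * v (t j))`. -/
def diagMove (r : ℕ) (c : Idx r → Kq) (t : Idx r → Idx r) : Module.End Kq (Vb r) where
  toFun v := fun j => c j * v (t j)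
  map_add' u v := by funext j; simp [Pi.add_apply, mul_add]
  map_smul' s v := by
    funext j
    simp only [Pi.smul_apply, smul_eq_mul, RingHom.id_apply]
    ring

/-- The operator `e_i` on `V̄`: `e_i η_{i+1/2} = η_{i-1/2}`, zero on other basis vectors. -/
def opE (r : ℕ) (a : Fin (2*r+3)) : Module.End Kq (Vb r) :=
  diagMove r (fun j => if j = loI a then 1 else 0) (fun j => if j = loI a then hiI a else j)

/-- The operator `f_i` on `V̄`: `f_i η_{i-1/2} = η_{i+1/2}`, zero on other basis vectors. -/
def opF (r : ℕ) (a : Fin (2*r+3)) : Module.End Kq (Vb r) :=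
  diagMove r (fun j => if j = hiI a then 1 else 0) (fun j => if j = hiI a then loI a else j)

/-- The operator `κ_i` on `V̄`. -/
def opK (r : ℕ) (a : Fin (2*r+3)) : Module.End Kq (Vb r) :=
  diagMove r (fun j => if j = loI a then qv else if j = hiI a then qv⁻¹ else 1) id

/-- The operator `κ_i⁻¹` on `V̄`. -/
def opKinv (r : ℕ) (a : Fin (2*r+3)) : Module.End Kq (Vb r) :=
  diagMove r (fun j => if j = loI a then qv⁻¹ else if j = hiI a then qv else 1) id

/-- A linear endomorphism of `V̄^⊗m` given by a "matrix" `c`. -/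
def matOp (r m : ℕ) (c : (Fin m → Idx r) → (Fin m → Idx r) → Kq) : Module.End Kq (TP r m) where
  toFun v := fun g => ∑ f : Fin m → Idx r, c g f * v f
  map_add' u v := by
    funext g
    simp [Pi.add_apply, mul_add, Finset.sum_add_distrib]
  map_smul' s v := by
    funext g
    simp only [Pi.smul_apply, smul_eq_mul, RingHom.id_apply, Finset.mul_sum]
    exact Finset.sum_congr rfl (fun f _ => by ring)

/-- The tensor product `A 0 ⊗ A 1 ⊗ ⋯ ⊗ A (m-1)` of endomorphisms of `V̄`,
as an endomorphism of `V̄^⊗m`. -/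
def tensorOp (r m : ℕ) (A : Fin m → Module.End Kq (Vb r)) : Module.End Kq (TP r m) :=
  matOp r m (fun g f => ∏ k : Fin m, (A k) (Pi.single (f k) 1) (g k))
/-- `𝔼_i = Σ_j id^{⊗(j-1)} ⊗ e_i ⊗ (κ_i⁻¹)^{⊗(m-j)}` on `V̄^⊗m`. -/
def opEE (r m : ℕ) (a : Fin (2*r+3)) : Module.End Kq (TP r m) :=
  ∑ j : Fin m, tensorOp r m (fun k =>
    if (k : ℕ) < (j : ℕ) then 1 else if k = j then opE r a else opKinv r a)

/-- `𝔽_i = Σ_j κ_i^{⊗(j-1)} ⊗ f_i ⊗ id^{⊗(m-j)}` on `V̄^⊗m`. -/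
def opFF (r m : ℕ) (a : Fin (2*r+3)) : Module.End Kq (TP r m) :=
  ∑ j : Fin m, tensorOp r m (fun k =>
    if (k : ℕ) < (j : ℕ) then opK r a else if k = j then opF r a else 1)

/-- `𝕂_i = κ_i^{⊗m}`. -/
def opKK (r m : ℕ) (a : Fin (2*r+3)) : Module.End Kq (TP r m) :=
  tensorOp r m (fun _ => opK r a)

/-- `𝕂_i⁻¹ = (κ_i⁻¹)^{⊗m}`. -/
def opKKinv (r m : ℕ) (a : Fin (2*r+3)) : Module.End Kq (TP r m) :=
  tensorOp r m (fun _ => opKinv r a)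

/-- `𝕜_i = 𝕂_i 𝕂_{-i}⁻¹` (the index `-i` corresponds to `Fin.rev a`). -/
def opkk (r m : ℕ) (a : Fin (2*r+3)) : Module.End Kq (TP r m) :=
  opKK r m a * opKKinv r m a.rev

/-- `𝕜_i⁻¹ = 𝕂_{-i} 𝕂_i⁻¹`. -/
def opkkInv (r m : ℕ) (a : Fin (2*r+3)) : Module.End Kq (TP r m) :=
  opKK r m a.rev * opKKinv r m a

/-- The index `a` corresponding to `i = 0`. -/
def midI (r : ℕ) : Fin (2*r+3) := ⟨r+1, by omega⟩

/-- `ℬ_i = 𝔼_i + 𝔽_{-i} 𝕂_i⁻¹` for `i ≠ 0`. -/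
def opB (r m : ℕ) (a : Fin (2*r+3)) : Module.End Kq (TP r m) :=
  opEE r m a + opFF r m a.rev * opKKinv r m a

/-- `ℬ_0 = 𝔼_0 + q 𝔽_0 𝕂_0⁻¹ + 𝕂_0⁻¹`. -/
def opB0 (r m : ℕ) : Module.End Kq (TP r m) :=
  opEE r m (midI r) + qv • (opFF r m (midI r) * opKKinv r m (midI r)) + opKKinv r m (midI r)

/-- Generating set of the Levi-type ıquantum group image `Φ(L_q^ı)`:
`ℬ_0`, the `ℬ_i` with `0 ≠ i`, `-r ≤ i ≤ r`, and the `𝕜_i^{±1}` with `-r-1 ≤ i ≤ r+1`. -/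
def LeviSet (r m : ℕ) : Set (Module.End Kq (TP r m)) :=
  {opB0 r m} ∪ (opB r m '' {a | a ≠ midI r ∧ 0 < (a : ℕ) ∧ (a : ℕ) < 2*r+2}) ∪
    Set.range (opkk r m) ∪ Set.range (opkkInv r m)

/-- `Φ(L_q^ı)`, the image of the Levi-type ıquantum group in `End(V̄^⊗m)`. -/
def PhiL (r m : ℕ) : Subalgebra Kq (Module.End Kq (TP r m)) :=
  Algebra.adjoin Kq (LeviSet r m)

/-- The operator `Ψ(H_0)` on `V̄^⊗m`. -/
def R0op (r m : ℕ) : Module.End Kq (TP r m) :=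
  if h : 0 < m then
    { toFun := fun v g =>
        v (Function.update g ⟨0, h⟩ (Fin.rev (g ⟨0, h⟩))) +
          (if g ⟨0, h⟩ < Fin.rev (g ⟨0, h⟩) then (qv⁻¹ - qv) * v g else 0)
      map_add' := fun u v => by
        funext g
        simp only [Pi.add_apply]
        split_ifs <;> ring
      map_smul' := fun s v => by
        funext g
        simp only [Pi.smul_apply, smul_eq_mul, RingHom.id_apply]
        split_ifs <;> ring }
  else 1

/-- The operator `Ψ(H_{p+1})` on `V̄^⊗m`, interchanging tensor positions `p` and `p+1`
(0-based). -/
def Rsw (r m : ℕ) (p : ℕ) : Module.End Kq (TP r m) :=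
  if h : p + 1 < m then
    { toFun := fun v g =>
        if g ⟨p, by omega⟩ = g ⟨p+1, h⟩ then qv⁻¹ * v g
        else v (g ∘ Equiv.swap ⟨p, by omega⟩ ⟨p+1, h⟩) +
          (if g ⟨p+1, h⟩ < g ⟨p, by omega⟩ then (qv⁻¹ - qv) * v g else 0)
      map_add' := fun u v => by
        funext g
        simp only [Pi.add_apply, Function.comp_apply]
        split_ifs <;> ring
      map_smul' := fun s v => by
        funext g
        simp only [Pi.smul_apply, smul_eq_mul, RingHom.id_apply, Function.comp_apply]
        split_ifs <;> ring }
  else 1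

/-- The operator `Ψ(H_i)` on `V̄^⊗m`, for `0 ≤ i ≤ m-1`. -/
def RopN (r m : ℕ) (i : ℕ) : Module.End Kq (TP r m) :=
  if i = 0 then R0op r m else Rsw r m (i - 1)
/-- `j ∈ 𝕀(2r+2)`, i.e. `η_j ∈ V`. -/
def innerI (r : ℕ) (j : Idx r) : Prop := j ≠ botI r ∧ j ≠ topI r

/-- `f` indexes a basis vector of `V^{⊗l} ⊗ η_{r+3/2}^{⊗(m-l)}`. -/
def goodF (r m : ℕ) (l : ℕ) (f : Fin m → Idx r) : Prop :=
  ∀ k : Fin m, ((k : ℕ) < l → innerI r (f k)) ∧ (l ≤ (k : ℕ) → f k = topI r)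

/-- The subspace `V̄_{{1,…,l},∅} = V^{⊗l} ⊗ η_{r+3/2}^{⊗(m-l)}` of `V̄^⊗m`. -/
def Vsub (r m : ℕ) (l : ℕ) : Submodule Kq (TP r m) :=
  Submodule.span Kq {v | ∃ f, goodF r m l f ∧ v = Mf f}

/-- The subspace `V̄_{I,J}` of `V̄^⊗m`. -/
def VIJ (r m : ℕ) (I J : Finset (Fin m)) : Submodule Kq (TP r m) :=
  Submodule.span Kq {v | ∃ f : Fin m → Idx r,
    (∀ k : Fin m, (k ∈ I → innerI r (f k)) ∧ (k ∈ J → f k = botI r) ∧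
      (k ∉ I → k ∉ J → f k = topI r)) ∧ v = Mf f}

/-- The subspace `V̄_l = ⊕_{#I = l, J} V̄_{I,J}` of `V̄^⊗m`. -/
def Vlevel (r m : ℕ) (l : ℕ) : Submodule Kq (TP r m) :=
  Submodule.span Kq {v | ∃ f : Fin m → Idx r,
    Nat.card {k : Fin m // innerI r (f k)} = l ∧ v = Mf f}

/-- The length (number of inversions) of a permutation of `{0, …, l-1}`. -/
def lenPerm {l : ℕ} (σ : Equiv.Perm (Fin l)) : ℕ :=
  (Finset.univ.filter (fun p : Fin l × Fin l => p.1 < p.2 ∧ σ p.2 < σ p.1)).card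

/-- The simple transposition interchanging `p` and `p+1` (0-based) in `𝔖_l`;
this is the paper's `s_{p+1}`. -/
def adjSwap (l : ℕ) (p : ℕ) : Equiv.Perm (Fin l) :=
  if h : p + 1 < l then Equiv.swap ⟨p, by omega⟩ ⟨p+1, h⟩ else 1

/-- The first descent of a permutation, if any. -/
def descentIdx {l : ℕ} (σ : Equiv.Perm (Fin l)) : Option ℕ :=
  (List.range l).find? (fun p =>
    if h : p + 1 < l then decide (σ ⟨p+1, h⟩ < σ ⟨p, by omega⟩) else false)

/-- Canonical reduced word construction (with fuel). -/
def permWordAux {l : ℕ} : ℕ → Equiv.Perm (Fin l) → List ℕ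
  | 0, _ => []
  | (fuel+1), σ =>
    match descentIdx σ with
    | none => []
    | some p => permWordAux fuel (σ * adjSwap l p) ++ [p]

/-- A canonical reduced word for `σ`: `σ = s_{p₁+1} ⋯ s_{p_k+1}` (paper indexing)
where `permWord σ = [p₁, …, p_k]`, and `k = ℓ(σ)`. -/
def permWord {l : ℕ} (σ : Equiv.Perm (Fin l)) : List ℕ := permWordAux (lenPerm σ) σ

/-- The operator `Ψ(H_σ)` on `V̄^⊗m` for a permutation `σ ∈ 𝔖_l` (`l ≤ m`), where
`H_σ = H_{i₁} ⋯ H_{i_k}` for a reduced expression `σ = s_{i₁} ⋯ s_{i_k}`; since `Ψ` is an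
anti-homomorphism this is the product of the `Ψ(H_i)` in reversed order. -/
def opPerm (r m : ℕ) {l : ℕ} (σ : Equiv.Perm (Fin l)) : Module.End Kq (TP r m) :=
  (((permWord σ).map (fun p => RopN r m (p+1))).reverse).prod

/-- `A` is a finite product of the operators `Ψ(H_i)^{±1}`, `0 ≤ i ≤ m-1`. -/
def IsRWord (r m : ℕ) (A : Module.End Kq (TP r m)) : Prop :=
  ∃ ws : List (Module.End Kq (TP r m)), A = ws.prod ∧
    ∀ u ∈ ws, ∃ i : ℕ, i < m ∧
      (u = RopN r m i ∨ (u * RopN r m i = 1 ∧ RopN r m i * u = 1))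
/-- Generator `H_i` of the free algebra on `m` letters. -/
def Hvar (m : ℕ) (i : Fin m) : FreeAlgebra Kq (Fin m) := FreeAlgebra.ι Kq i

/-- The defining relations of the Iwahori–Hecke algebra `H(B_m)` of type `B_m`. -/
inductive HBrel (m : ℕ) : FreeAlgebra Kq (Fin m) → FreeAlgebra Kq (Fin m) → Prop
  | quad (i : Fin m) :
      HBrel m ((Hvar m i - algebraMap Kq _ qv⁻¹) * (Hvar m i + algebraMap Kq _ qv)) 0
  | braid (i : ℕ) (h1 : 1 ≤ i) (h2 : i + 1 < m) :
      HBrel m (Hvar m ⟨i, by omega⟩ * Hvar m ⟨i+1, h2⟩ * Hvar m ⟨i, by omega⟩)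
              (Hvar m ⟨i+1, h2⟩ * Hvar m ⟨i, by omega⟩ * Hvar m ⟨i+1, h2⟩)
  | comm (i j : Fin m) (h : (i : ℕ) + 1 < (j : ℕ) ∨ (j : ℕ) + 1 < (i : ℕ)) :
      HBrel m (Hvar m i * Hvar m j) (Hvar m j * Hvar m i)
  | braid0 (h : 1 < m) :
      HBrel m (Hvar m ⟨0, by omega⟩ * Hvar m ⟨1, h⟩ * Hvar m ⟨0, by omega⟩ * Hvar m ⟨1, h⟩)
              (Hvar m ⟨1, h⟩ * Hvar m ⟨0, by omega⟩ * Hvar m ⟨1, h⟩ * Hvar m ⟨0, by omega⟩)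

/-- The Iwahori–Hecke algebra `H(B_m)` of type `B_m` over `ℚ(q)`. -/
abbrev HeckeB (m : ℕ) := RingQuot (HBrel m)

/-- The generator `H_i ∈ H(B_m)`. -/
def Hgen (m : ℕ) (i : Fin m) : HeckeB m := RingQuot.mkAlgHom Kq (HBrel m) (Hvar m i)

/-- The generator `H_j ∈ H(B_m)` with out-of-range indices sent to `1`. -/
def HgenN (m : ℕ) (j : ℕ) : HeckeB m := if h : j < m then Hgen m ⟨j, h⟩ else 1

/-- The element `H_w ∈ H(B_m)` for `w ∈ 𝔖_m ⊂ 𝒲(B_m)`, defined via a reduced expression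
for `w` (well defined by Matsumoto's theorem). -/
def HpermB (m : ℕ) (w : Equiv.Perm (Fin m)) : HeckeB m :=
  ((permWord w).map (fun p => HgenN m (p+1))).prod

/-- Generators of the duplex Hecke algebra: the `T_i` and the `x_σ^{(l)}`. -/
def DGen (m : ℕ) : Type := (Fin m) ⊕ (Σ l : Fin (m+1), Equiv.Perm (Fin (l : ℕ)))

/-- The generator `T_i` of the free algebra. -/
def Tvar (m : ℕ) (i : Fin m) : FreeAlgebra Kq (DGen m) := FreeAlgebra.ι Kq (Sum.inl i)

/-- The generator `x_σ^{(l)}` of the free algebra. -/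
def Xvar (m : ℕ) (l : Fin (m+1)) (σ : Equiv.Perm (Fin (l : ℕ))) : FreeAlgebra Kq (DGen m) :=
  FreeAlgebra.ι Kq (Sum.inr ⟨l, σ⟩)

/-- The defining relations of the duplex Hecke algebra `𝓗_m` of type `B`. -/
inductive DHrel (m : ℕ) : FreeAlgebra Kq (DGen m) → FreeAlgebra Kq (DGen m) → Prop
  | quadT (i : Fin m) :
      DHrel m ((Tvar m i + algebraMap Kq _ qv) * (Tvar m i - algebraMap Kq _ qv⁻¹)) 0
  | braidT (i : ℕ) (h1 : 1 ≤ i) (h2 : i + 1 < m) :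
      DHrel m (Tvar m ⟨i, by omega⟩ * Tvar m ⟨i+1, h2⟩ * Tvar m ⟨i, by omega⟩)
              (Tvar m ⟨i+1, h2⟩ * Tvar m ⟨i, by omega⟩ * Tvar m ⟨i+1, h2⟩)
  | commT (i j : Fin m) (h : (i : ℕ) + 1 < (j : ℕ) ∨ (j : ℕ) + 1 < (i : ℕ)) :
      DHrel m (Tvar m i * Tvar m j) (Tvar m j * Tvar m i)
  | braid0T (h : 1 < m) :
      DHrel m (Tvar m ⟨0, by omega⟩ * Tvar m ⟨1, h⟩ * Tvar m ⟨0, by omega⟩ * Tvar m ⟨1, h⟩)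
              (Tvar m ⟨1, h⟩ * Tvar m ⟨0, by omega⟩ * Tvar m ⟨1, h⟩ * Tvar m ⟨0, by omega⟩)
  | xRightUp (l : Fin (m+1)) (σ : Equiv.Perm (Fin (l : ℕ))) (p : ℕ) (hp : p + 1 < (l : ℕ))
      (hlen : lenPerm (σ * adjSwap (l : ℕ) p) = lenPerm σ + 1) :
      DHrel m (Xvar m l σ * Xvar m l (adjSwap (l : ℕ) p)) (Xvar m l (σ * adjSwap (l : ℕ) p))
  | xRightDown (l : Fin (m+1)) (σ : Equiv.Perm (Fin (l : ℕ))) (p : ℕ) (hp : p + 1 < (l : ℕ))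
      (hlen : lenPerm (σ * adjSwap (l : ℕ) p) + 1 = lenPerm σ) :
      DHrel m (Xvar m l σ * Xvar m l (adjSwap (l : ℕ) p))
              (Xvar m l (σ * adjSwap (l : ℕ) p) + algebraMap Kq _ (qv⁻¹ - qv) * Xvar m l σ)
  | xLeftUp (l : Fin (m+1)) (σ : Equiv.Perm (Fin (l : ℕ))) (p : ℕ) (hp : p + 1 < (l : ℕ))
      (hlen : lenPerm (adjSwap (l : ℕ) p * σ) = lenPerm σ + 1) :
      DHrel m (Xvar m l (adjSwap (l : ℕ) p) * Xvar m l σ) (Xvar m l (adjSwap (l : ℕ) p * σ))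
  | xLeftDown (l : Fin (m+1)) (σ : Equiv.Perm (Fin (l : ℕ))) (p : ℕ) (hp : p + 1 < (l : ℕ))
      (hlen : lenPerm (adjSwap (l : ℕ) p * σ) + 1 = lenPerm σ) :
      DHrel m (Xvar m l (adjSwap (l : ℕ) p) * Xvar m l σ)
              (Xvar m l (adjSwap (l : ℕ) p * σ) + algebraMap Kq _ (qv⁻¹ - qv) * Xvar m l σ)
  | xOrtho (l k : Fin (m+1)) (h : l ≠ k) (σ : Equiv.Perm (Fin (l : ℕ)))
      (γ : Equiv.Perm (Fin (k : ℕ))) :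
      DHrel m (Xvar m l σ * Xvar m k γ) 0
  | TxMid (i : ℕ) (l : Fin (m+1)) (h0 : 0 < i) (hil : i < (l : ℕ))
      (σ : Equiv.Perm (Fin (l : ℕ))) :
      DHrel m (Tvar m ⟨i, by have := l.2; omega⟩ * Xvar m l σ)
              (Xvar m l (adjSwap (l : ℕ) (i-1)) * Xvar m l σ)
  | xTMid (i : ℕ) (l : Fin (m+1)) (h0 : 0 < i) (hil : i < (l : ℕ))
      (σ : Equiv.Perm (Fin (l : ℕ))) :
      DHrel m (Xvar m l σ * Tvar m ⟨i, by have := l.2; omega⟩)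
              (Xvar m l σ * Xvar m l (adjSwap (l : ℕ) (i-1)))
  | TxBig (i : Fin m) (l : Fin (m+1)) (h : (l : ℕ) < (i : ℕ)) (σ : Equiv.Perm (Fin (l : ℕ))) :
      DHrel m (Tvar m i * Xvar m l σ) (algebraMap Kq _ qv⁻¹ * Xvar m l σ)
  | xTBig (i : Fin m) (l : Fin (m+1)) (h : (l : ℕ) < (i : ℕ)) (σ : Equiv.Perm (Fin (l : ℕ))) :
      DHrel m (Xvar m l σ * Tvar m i) (algebraMap Kq _ qv⁻¹ * Xvar m l σ)

/-- The duplex Hecke algebra `𝓗_m` of type `B` over `ℚ(q)`. -/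
abbrev DuplexH (m : ℕ) := RingQuot (DHrel m)

/-- The generator `T_i ∈ 𝓗_m`. -/
def Tg (m : ℕ) (i : Fin m) : DuplexH m := RingQuot.mkAlgHom Kq (DHrel m) (Tvar m i)

/-- The generator `x_σ^{(l)} ∈ 𝓗_m`. -/
def Xg (m : ℕ) (l : Fin (m+1)) (σ : Equiv.Perm (Fin (l : ℕ))) : DuplexH m :=
  RingQuot.mkAlgHom Kq (DHrel m) (Xvar m l σ)


/-! ### Rational functions and their values at `q = 1` -/

open Polynomial in
/-- `HasVal x c`: the rational function `x` is regular at `q = 1`, with value `c` there.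
The denominator is normalised to take the value `1`. -/
def HasVal (x : Kq) (c : ℚ) : Prop :=
  ∃ p d : ℚ[X], d.eval 1 = 1 ∧ p.eval 1 = c ∧ algebraMap ℚ[X] Kq d * x = algebraMap ℚ[X] Kq p

namespace HasVal

open Polynomial

lemma poly (p : ℚ[X]) : HasVal (algebraMap ℚ[X] Kq p) (p.eval 1) := ⟨p, 1, by simp, rfl, by simp⟩

lemma const (c : ℚ) : HasVal (algebraMap ℚ Kq c) c := by
  have h := poly (C c)
  rw [eval_C] at h
  rwa [IsScalarTower.algebraMap_apply ℚ ℚ[X] Kq]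

lemma zero : HasVal 0 0 := by simpa using const 0

lemma one : HasVal 1 1 := by simpa using const 1

lemma add {x y : Kq} {a b : ℚ} (hx : HasVal x a) (hy : HasVal y b) : HasVal (x + y) (a + b) := by
  obtain ⟨p, d, hd, hp, h⟩ := hx
  obtain ⟨p', d', hd', hp', h'⟩ := hy
  refine ⟨p * d' + p' * d, d * d', by simp [hd, hd'], by simp [hd, hd', hp, hp'], ?_⟩
  simp only [map_add, map_mul, ← h, ← h']
  ring

lemma mul {x y : Kq} {a b : ℚ} (hx : HasVal x a) (hy : HasVal y b) : HasVal (x * y) (a * b) := by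
  obtain ⟨p, d, hd, hp, h⟩ := hx
  obtain ⟨p', d', hd', hp', h'⟩ := hy
  refine ⟨p * p', d * d', by simp [hd, hd'], by simp [hp, hp'], ?_⟩
  simp only [map_mul, ← h, ← h']
  ring

lemma neg {x : Kq} {a : ℚ} (hx : HasVal x a) : HasVal (-x) (-a) := by
  simpa using (const (-1)).mul hx

lemma sub {x y : Kq} {a b : ℚ} (hx : HasVal x a) (hy : HasVal y b) : HasVal (x - y) (a - b) := by
  simpa [sub_eq_add_neg] using hx.add hy.neg

lemma sum {ι : Type*} (s : Finset ι) {x : ι → Kq} {a : ι → ℚ} (h : ∀ i ∈ s, HasVal (x i) (a i)) :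
    HasVal (∑ i ∈ s, x i) (∑ i ∈ s, a i) := by
  classical
  induction s using Finset.induction_on with
  | empty => simpa using zero
  | insert i s hi ih =>
    rw [Finset.sum_insert hi, Finset.sum_insert hi]
    exact (h i (by simp)).add (ih fun j hj => h j (by simp [hj]))

lemma prod {ι : Type*} (s : Finset ι) {x : ι → Kq} {a : ι → ℚ} (h : ∀ i ∈ s, HasVal (x i) (a i)) :
    HasVal (∏ i ∈ s, x i) (∏ i ∈ s, a i) := by
  classical
  induction s using Finset.induction_on with
  | empty => simpa using one
  | insert i s hi ih =>
    rw [Finset.prod_insert hi, Finset.prod_insert hi]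
    exact (h i (by simp)).mul (ih fun j hj => h j (by simp [hj]))

lemma ite {P : Prop} [Decidable P] {x y : Kq} {a b : ℚ} (hx : HasVal x a) (hy : HasVal y b) :
    HasVal (if P then x else y) (if P then a else b) := by
  split_ifs <;> assumption

lemma unique {x : Kq} {a b : ℚ} (hx : HasVal x a) (hy : HasVal x b) : a = b := by
  obtain ⟨p, d, hd, hp, h⟩ := hx
  obtain ⟨p', d', hd', hp', h'⟩ := hy
  have e : p * d' = p' * d := by
    apply IsFractionRing.injective ℚ[X] Kq
    simp only [map_mul, ← h, ← h']
    ring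
  have := congrArg (eval 1) e
  simpa [hd, hd', hp, hp'] using this

lemma q : HasVal qv 1 := by
  have h := poly X
  rwa [eval_X, RatFunc.algebraMap_X] at h

lemma qv_ne : qv ≠ 0 := RatFunc.X_ne_zero

lemma qinv : HasVal qv⁻¹ 1 :=
  ⟨1, X, by simp, by simp, by
    rw [RatFunc.algebraMap_X, map_one]
    exact mul_inv_cancel₀ qv_ne⟩

end HasVal

lemma qv_ne_zero : qv ≠ 0 := HasVal.qv_ne

lemma qv_sub_one_ne : qv - 1 ≠ 0 := by
  have h : algebraMap (Polynomial ℚ) Kq (Polynomial.X - Polynomial.C 1) = qv - 1 := by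
    simp [RatFunc.algebraMap_X, qv]
  rw [← h]
  exact (map_ne_zero_iff _ (IsFractionRing.injective _ _)).2 (Polynomial.X_sub_C_ne_zero 1)

/-- `HasDer x d`: `x` is regular at `q = 1` with value `1` and derivative `d` there. -/
def HasDer (x : Kq) (d : ℚ) : Prop := HasVal ((x - 1) / (qv - 1)) d

namespace HasDer

lemma val {x : Kq} {d : ℚ} (h : HasDer x d) : HasVal x 1 := by
  have h2 := (h.mul (HasVal.q.sub HasVal.one)).add HasVal.one
  rwa [div_mul_cancel₀ _ qv_sub_one_ne, sub_add_cancel, sub_self, mul_zero, zero_add] at h2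

lemma one : HasDer 1 0 := by simpa [HasDer] using HasVal.zero

lemma mul {x y : Kq} {a b : ℚ} (hx : HasDer x a) (hy : HasDer y b) : HasDer (x * y) (a + b) := by
  have h := (HasVal.mul hx hy.val).add hy
  rw [mul_one] at h
  rw [HasDer]
  convert h using 1
  ring

lemma q : HasDer qv 1 := by
  simpa [HasDer, div_self qv_sub_one_ne] using HasVal.one

lemma qinv : HasDer qv⁻¹ (-1) := by
  have h := HasVal.qinv.neg
  rw [HasDer]
  convert h using 1
  have := qv_ne_zero
  have := qv_sub_one_ne
  field_simp
  ring

lemma prod {ι : Type*} (s : Finset ι) {x : ι → Kq} {a : ι → ℚ} (h : ∀ i ∈ s, HasDer (x i) (a i)) :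
    HasDer (∏ i ∈ s, x i) (∑ i ∈ s, a i) := by
  classical
  induction s using Finset.induction_on with
  | empty => simpa using one
  | insert i s hi ih =>
    rw [Finset.prod_insert hi, Finset.sum_insert hi]
    exact (h i (by simp)).mul (ih fun j hj => h j (by simp [hj]))

end HasDer

open Polynomial in
/-- The field `ℚ(q)` is formally real. -/
lemma kq_sum_sq {ι : Type*} [Fintype ι] (x : ι → Kq) (h : ∑ i, x i * x i = 0) (i : ι) :
    x i = 0 := by
  obtain ⟨b, hb⟩ := IsLocalization.exist_integer_multiples_of_finite (nonZeroDivisors ℚ[X]) x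
  choose p hp using hb
  have hb0 : algebraMap ℚ[X] Kq b ≠ 0 :=
    (map_ne_zero_iff _ (IsFractionRing.injective _ _)).2 (nonZeroDivisors.coe_ne_zero b)
  have hp' : ∀ i, algebraMap ℚ[X] Kq (p i) = algebraMap ℚ[X] Kq b * x i := by
    intro i
    rw [hp i, Algebra.smul_def]
  have hs : ∑ i, p i * p i = 0 := by
    apply IsFractionRing.injective ℚ[X] Kq
    rw [map_sum, map_zero]
    calc _ = ∑ i, (algebraMap ℚ[X] Kq b * algebraMap ℚ[X] Kq b) * (x i * x i) := by
            refine Finset.sum_congr rfl fun i _ => ?_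
            rw [map_mul, hp' i]; ring
      _ = 0 := by rw [← Finset.mul_sum, h, mul_zero]
  have hpi : p i = 0 := by
    refine Polynomial.funext fun t => ?_
    have ht := congrArg (eval t) hs
    rw [eval_finsetSum, eval_zero] at ht
    have := (Finset.sum_eq_zero_iff_of_nonneg (fun j _ => by
      rw [eval_mul]; exact mul_self_nonneg _)).1 ht i (Finset.mem_univ _)
    rw [eval_mul] at this
    simpa using mul_self_eq_zero.1 this
  have := hp' i
  rw [hpi, map_zero] at this
  exact (mul_eq_zero.1 this.symm).resolve_left hb0

/-! ### Specialisation of commutants at `q = 1` -/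

/-- Entrywise version of `HasVal` for matrices. -/
def MVal {n : Type*} (Y : Matrix n n Kq) (C : Matrix n n ℚ) : Prop := ∀ i j, HasVal (Y i j) (C i j)

namespace MVal

variable {n : Type*} {Y Y' : Matrix n n Kq} {C C' : Matrix n n ℚ}

lemma add (h : MVal Y C) (h' : MVal Y' C') : MVal (Y + Y') (C + C') :=
  fun i j => (h i j).add (h' i j)

lemma sub (h : MVal Y C) (h' : MVal Y' C') : MVal (Y - Y') (C - C') :=
  fun i j => (h i j).sub (h' i j)

lemma mul [Fintype n] (h : MVal Y C) (h' : MVal Y' C') : MVal (Y * Y') (C * C') := fun i j => by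
  rw [Matrix.mul_apply, Matrix.mul_apply]
  exact HasVal.sum _ fun k _ => (h i k).mul (h' k j)

lemma one [DecidableEq n] : MVal (1 : Matrix n n Kq) 1 := fun i j => by
  rw [Matrix.one_apply, Matrix.one_apply]
  exact HasVal.one.ite HasVal.zero

lemma sum {ι : Type*} (s : Finset ι) {x : ι → Matrix n n Kq} {a : ι → Matrix n n ℚ}
    (h : ∀ i ∈ s, MVal (x i) (a i)) : MVal (∑ i ∈ s, x i) (∑ i ∈ s, a i) := fun i j => by
  rw [Matrix.sum_apply, Matrix.sum_apply]
  exact HasVal.sum _ fun k hk => h k hk i j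

lemma smul {x : Kq} {a : ℚ} (hx : HasVal x a) (h : MVal Y C) : MVal (x • Y) (a • C) :=
  fun i j => hx.mul (h i j)

lemma unique (h : MVal Y C) (h' : MVal Y C') : C = C' := by
  ext i j
  exact (h i j).unique (h' i j)

end MVal

open Polynomial in
/-- A matrix regular at `q = 1` becomes polynomial after multiplication by a polynomial taking the
value `1` at `q = 1`. -/
lemma MVal.clear {n : Type*} [Fintype n] {Y : Matrix n n Kq} {C : Matrix n n ℚ} (h : MVal Y C) :
    ∃ (d : ℚ[X]) (P : Matrix n n ℚ[X]), (∀ i j, (P i j).eval 1 = C i j) ∧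
      algebraMap ℚ[X] Kq d • Y = P.map (algebraMap ℚ[X] Kq) := by
  classical
  choose p d hd hp he using h
  refine ⟨∏ x : n × n, d x.1 x.2, Matrix.of fun i j => p i j * ∏ x ∈ Finset.univ.erase (i, j), d x.1 x.2,
    fun i j => ?_, ?_⟩
  · rw [Matrix.of_apply, eval_mul, hp, eval_prod, Finset.prod_congr rfl fun x _ => hd x.1 x.2]
    simp
  · ext i j
    rw [Matrix.smul_apply, Matrix.map_apply, Matrix.of_apply, smul_eq_mul, map_mul, ← he,
      ← Finset.mul_prod_erase _ _ (Finset.mem_univ (i, j)), map_mul]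
    ring

open Polynomial in
/-- If the commutant of the values at `q = 1` of a family `S` of matrices is contained in the
reduction of `U ⊆ S'`, then `U` is the whole commutant `S'`: the lattice of polynomial matrices
in `S'` equals `U` plus `q - 1` times itself, so Nakayama's lemma applies. -/
lemma commutant_le_of_specialization {n : Type*} [Fintype n] [DecidableEq n]
    (U : Submodule Kq (Matrix n n Kq)) (S : Set (Matrix n n Kq))
    (hU : ∀ Y ∈ U, ∀ s ∈ S, Y * s = s * Y)
    (hspec : ∀ C : Matrix n n ℚ, (∀ s ∈ S, ∀ c, MVal s c → C * c = c * C) → ∃ Y ∈ U, MVal Y C)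
    (Y : Matrix n n Kq) (hY : ∀ s ∈ S, Y * s = s * Y) : Y ∈ U := by
  let φ : Matrix n n ℚ[X] →ₗ[ℚ[X]] Matrix n n Kq := (Algebra.linearMap ℚ[X] Kq).mapMatrix
  have hφ : ∀ P : Matrix n n ℚ[X], φ P = P.map (algebraMap ℚ[X] Kq) := fun _ => rfl
  let Z : Submodule Kq (Matrix n n Kq) :=
    { carrier := {Y | ∀ s ∈ S, Y * s = s * Y}
      add_mem' := fun {a b} ha hb s hs => by rw [add_mul, mul_add, ha s hs, hb s hs]
      zero_mem' := fun s _ => by simp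
      smul_mem' := fun c a ha s hs => by rw [smul_mul_assoc, mul_smul_comm, ha s hs] }
  let M : Submodule ℚ[X] (Matrix n n ℚ[X]) := (Z.restrictScalars ℚ[X]).comap φ
  let N : Submodule ℚ[X] (Matrix n n ℚ[X]) := (U.restrictScalars ℚ[X]).comap φ
  let I : Ideal ℚ[X] := Ideal.span {X - C 1}
  have key : M ≤ N ⊔ I • M := by
    intro P hP
    have hPv : MVal (φ P) (P.map (eval 1)) := fun i j => HasVal.poly (P i j)
    obtain ⟨Y, hYU, hYv⟩ := hspec (P.map (eval 1)) fun s hs c hc =>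
      (hPv.mul hc).unique (by rw [show φ P * s = s * φ P from hP s hs]; exact hc.mul hPv)
    obtain ⟨d, Q, hQ, hdQ⟩ := hYv.clear
    have hQN : Q ∈ N := by
      change φ Q ∈ U
      rw [hφ, ← hdQ]
      exact U.smul_mem _ hYU
    have hdiv : ∀ i j, ∃ t, (P - Q) i j = (X - C 1) * t := fun i j => by
      have : (X - C 1) ∣ (P - Q) i j := by
        rw [dvd_iff_isRoot, IsRoot.def, Matrix.sub_apply, eval_sub, hQ, Matrix.map_apply, sub_self]
      exact this
    choose T hT using hdiv
    have hPQ : P - Q = (X - C 1 : ℚ[X]) • Matrix.of T := by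
      ext1 i j
      exact hT i j
    have hTM : Matrix.of T ∈ M := by
      have h1 : φ (P - Q) ∈ Z := by
        rw [map_sub]
        exact Z.sub_mem hP (hU _ hQN)
      rw [hPQ, map_smul, algebra_compatible_smul Kq] at h1
      refine (Z.smul_mem_iff ?_).1 h1
      exact (map_ne_zero_iff _ (IsFractionRing.injective _ _)).2 (X_sub_C_ne_zero 1)
    rw [← add_sub_cancel Q P, hPQ]
    exact Submodule.add_mem_sup hQN
      (Submodule.smul_mem_smul (Ideal.subset_span (Set.mem_singleton _)) hTM)
  obtain ⟨p, hp1, hp⟩ := Submodule.exists_sub_one_mem_and_smul_eq_zero_of_fg_of_le_smul I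
    (M.map N.mkQ) ((IsNoetherian.noetherian M).map _) (by
      have h := Submodule.map_mono (f := N.mkQ) key
      rwa [Submodule.map_sup, Submodule.map_smul'', Submodule.mkQ_map_self, bot_sup_eq] at h)
  have hp0 : p ≠ 0 := by
    rintro rfl
    obtain ⟨t, ht⟩ := Ideal.mem_span_singleton'.1 hp1
    simpa using congrArg (eval 1) ht
  have hMN : ∀ P : Matrix n n ℚ[X], φ P ∈ Z → φ P ∈ U := fun P hP => by
    have h1 := hp (N.mkQ P) (Submodule.mem_map_of_mem hP)
    rw [← map_smul, Submodule.mkQ_apply, Submodule.Quotient.mk_eq_zero] at h1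
    change φ (p • P) ∈ U at h1
    rw [map_smul, algebra_compatible_smul Kq] at h1
    exact (U.smul_mem_iff ((map_ne_zero_iff _ (IsFractionRing.injective _ _)).2 hp0)).1 h1
  obtain ⟨b, hb⟩ := IsLocalization.exist_integer_multiples_of_finite (nonZeroDivisors ℚ[X])
    (fun x : n × n => Y x.1 x.2)
  choose P hP using hb
  have hbY : φ (Matrix.of fun i j => P (i, j)) = algebraMap ℚ[X] Kq b • Y := by
    ext i j
    have := hP (i, j)
    rw [Algebra.smul_def] at this
    exact this
  have h2 := hMN (Matrix.of fun i j => P (i, j)) (by rw [hbY]; exact Z.smul_mem _ hY)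
  rw [hbY] at h2
  exact (U.smul_mem_iff ((map_ne_zero_iff _ (IsFractionRing.injective _ _)).2
    (nonZeroDivisors.coe_ne_zero b))).1 h2

/-! ### A double commutant theorem for transpose-closed matrix algebras -/

/-- A subalgebra of `Mat_n(ℚ(q))` closed under transposition is its own double commutant. The trace
form `(X, Y) ↦ tr(XᵀY)` is anisotropic because `ℚ(q)` is formally real, so the subalgebra is a
direct summand of the left module `Mat_n`, and the matrix blocks of the orthogonal projection
onto it commute with the subalgebra. -/
lemma mem_of_mem_bicommutant {n : Type*} [Fintype n] [DecidableEq n]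
    (S : Subalgebra Kq (Matrix n n Kq)) (hS : ∀ s ∈ S, s.transpose ∈ S) (A : Matrix n n Kq)
    (hA : ∀ Z : Matrix n n Kq, (∀ s ∈ S, Z * s = s * Z) → A * Z = Z * A) : A ∈ S := by
  let B : LinearMap.BilinForm Kq (Matrix n n Kq) :=
    LinearMap.mk₂ Kq (fun X Y => (X.transpose * Y).trace)
      (fun X X' Y => by simp [add_mul]) (fun c X Y => by simp)
      (fun X Y Y' => by simp [mul_add]) (fun c X Y => by simp)
  have hB : ∀ X Y, B X Y = (X.transpose * Y).trace := fun _ _ => rfl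
  have hsymm : ∀ X Y, B X Y = B Y X := fun X Y => by
    rw [hB, hB, ← Matrix.trace_transpose, Matrix.transpose_mul, Matrix.transpose_transpose]
  have hrefl : B.IsRefl := fun X Y h => by rw [hsymm, h]
  have haniso : ∀ X, B X X = 0 → X = 0 := fun X h => by
    have h1 : ∑ x : n × n, X x.2 x.1 * X x.2 x.1 = 0 := by
      rw [Fintype.sum_prod_type, ← h, hB, Matrix.trace]
      simp [Matrix.mul_apply]
    ext i j
    exact kq_sum_sq (fun x : n × n => X x.2 x.1) h1 (j, i)
  let W := Subalgebra.toSubmodule S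
  have hW : IsCompl W (B.orthogonal W) := by
    rw [LinearMap.BilinForm.isCompl_orthogonal_iff_disjoint hrefl, Submodule.disjoint_def]
    intro x hx hx'
    exact haniso x (LinearMap.BilinForm.mem_orthogonal_iff.1 hx' x hx)
  -- Both summands are left ideals over `S`, so the projection `π` onto `S` commutes with left
  -- multiplication by `S`.
  let π := W.projection (B.orthogonal W) hW
  have hπS : ∀ s ∈ S, ∀ Y, π (s * Y) = s * π Y := by
    intro s hs Y
    obtain ⟨w, hw, z, hz, rfl⟩ : ∃ w ∈ W, ∃ z ∈ B.orthogonal W, w + z = Y :=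
      Submodule.mem_sup.1 (by rw [hW.sup_eq_top]; trivial)
    have h1 : ∀ w ∈ W, π w = w := fun w hw => Submodule.projection_apply_left hW ⟨w, hw⟩
    have h2 : ∀ z ∈ B.orthogonal W, π z = 0 := fun z hz =>
      Submodule.projection_apply_of_mem_right hW hz
    have h3 : s * z ∈ B.orthogonal W := by
      rw [LinearMap.BilinForm.mem_orthogonal_iff] at hz ⊢
      intro t ht
      have h4 := hz (s.transpose * t) (S.mul_mem (hS s hs) ht)
      rw [hB] at h4 ⊢
      rw [← h4, Matrix.transpose_mul, Matrix.transpose_transpose, Matrix.mul_assoc]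
    rw [mul_add, map_add, map_add, h1 _ hw, h2 _ hz, h2 _ h3, h1 _ (S.mul_mem hs hw), add_zero,
      add_zero]
  -- Column by column, `π` is a block matrix with blocks `Z j i`; these lie in the commutant of `S`,
  -- hence commute with `A`, which gives `π A = A * π 1 = A`.
  let Z : n → n → Matrix n n Kq := fun j i => Matrix.of fun a b => π (Matrix.single b i 1) a j
  have hsingle : ∀ (Y : Matrix n n Kq), Y = ∑ b, ∑ i, Y b i • Matrix.single b i (1 : Kq) := by
    intro Y
    conv_lhs => rw [Matrix.matrix_eq_sum_single Y]
    simp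
  have hπ : ∀ Y a j, π Y a j = ∑ i, (Z j i * Y) a i := by
    intro Y a j
    conv_lhs => rw [hsingle Y]
    rw [map_sum, Matrix.sum_apply, Finset.sum_congr rfl fun b _ => by
      rw [map_sum, Matrix.sum_apply], Finset.sum_comm]
    refine Finset.sum_congr rfl fun i _ => ?_
    rw [Matrix.mul_apply]
    refine Finset.sum_congr rfl fun b _ => ?_
    rw [map_smul, Matrix.smul_apply, smul_eq_mul, mul_comm]
    rfl
  have hZ : ∀ j i, ∀ s ∈ S, Z j i * s = s * Z j i := by
    intro j i s hs
    ext a b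
    have h1 : s * Matrix.single b i (1 : Kq) = ∑ c, s c b • Matrix.single c i (1 : Kq) := by
      ext x y
      rw [Matrix.mul_apply, Matrix.sum_apply]
      simp only [Matrix.single_apply, Matrix.smul_apply, smul_eq_mul]
      rw [Finset.sum_eq_single b (by intro c _ hc; simp [hc.symm]) (by simp),
        Finset.sum_eq_single x (by intro c _ hc; simp [hc]) (by simp)]
      simp
    have h2 := congrFun (congrFun (hπS s hs (Matrix.single b i 1)) a) j
    rw [h1, map_sum, Matrix.sum_apply, Matrix.mul_apply] at h2
    rw [Matrix.mul_apply, Matrix.mul_apply]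
    refine Eq.trans (Finset.sum_congr rfl fun c _ => ?_) h2
    rw [map_smul, Matrix.smul_apply, smul_eq_mul, mul_comm]
    rfl
  have hA1 : π A = A := by
    have h1 : π 1 = 1 := Submodule.projection_apply_left hW ⟨1, S.one_mem⟩
    have h2 : π A = A * π 1 := by
      ext a j
      rw [hπ, Matrix.mul_apply]
      simp_rw [hπ]
      rw [Finset.sum_congr rfl fun i _ => by rw [← hA _ (hZ j i), Matrix.mul_apply],
        Finset.sum_comm]
      refine Finset.sum_congr rfl fun c _ => ?_
      rw [← Finset.mul_sum]
      simp
    rw [h2, h1, mul_one]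
  rw [← hA1]
  exact Submodule.projection_apply_mem hW A

/-! ### Tensor products of matrices -/

section Tens

variable {m : ℕ} {I : Type*} {R : Type*} [CommRing R]

/-- The tensor (Kronecker) product `A 0 ⊗ ⋯ ⊗ A (m-1)` of square matrices. -/
def tens (A : Fin m → Matrix I I R) : Matrix (Fin m → I) (Fin m → I) R :=
  Matrix.of fun g f => ∏ k, A k (g k) (f k)

lemma tens_apply (A : Fin m → Matrix I I R) (g f : Fin m → I) :
    tens A g f = ∏ k, A k (g k) (f k) := rfl

lemma tens_mul [Fintype I] (A B : Fin m → Matrix I I R) :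
    tens A * tens B = tens fun k => A k * B k := by
  ext g f
  simp only [Matrix.mul_apply, tens_apply]
  rw [Finset.prod_univ_sum, Fintype.piFinset_univ]
  exact Finset.sum_congr rfl fun h _ => Finset.prod_mul_distrib.symm

lemma tens_one [DecidableEq I] : tens (fun _ : Fin m => (1 : Matrix I I R)) = 1 := by
  ext g f
  rw [tens_apply, Matrix.one_apply]
  simp only [Matrix.one_apply]
  rw [Finset.prod_ite_zero]
  simp [funext_iff]

lemma tens_update_add (A : Fin m → Matrix I I R) (k : Fin m) (x y : Matrix I I R) :
    tens (Function.update A k (x + y)) =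
      tens (Function.update A k x) + tens (Function.update A k y) := by
  ext g f
  simp only [Matrix.add_apply, tens_apply]
  rw [← Finset.mul_prod_erase _ _ (Finset.mem_univ k),
    ← Finset.mul_prod_erase _ _ (Finset.mem_univ k),
    ← Finset.mul_prod_erase _ _ (Finset.mem_univ k)]
  have h : ∀ z : Matrix I I R, ∏ l ∈ Finset.univ.erase k, Function.update A k z l (g l) (f l) =
      ∏ l ∈ Finset.univ.erase k, A l (g l) (f l) := fun z =>
    Finset.prod_congr rfl fun l hl => by rw [Function.update_of_ne (Finset.ne_of_mem_erase hl)]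
  simp only [h, Function.update_self, Matrix.add_apply, add_mul]

lemma tens_update_smul (A : Fin m → Matrix I I R) (k : Fin m) (c : R) (x : Matrix I I R) :
    tens (Function.update A k (c • x)) = c • tens (Function.update A k x) := by
  ext g f
  simp only [Matrix.smul_apply, tens_apply]
  rw [← Finset.mul_prod_erase _ _ (Finset.mem_univ k),
    ← Finset.mul_prod_erase _ _ (Finset.mem_univ k)]
  have h : ∀ z : Matrix I I R, ∏ l ∈ Finset.univ.erase k, Function.update A k z l (g l) (f l) =
      ∏ l ∈ Finset.univ.erase k, A l (g l) (f l) := fun z =>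
    Finset.prod_congr rfl fun l hl => by rw [Function.update_of_ne (Finset.ne_of_mem_erase hl)]
  simp only [h, Function.update_self, Matrix.smul_apply, smul_eq_mul, mul_assoc]

/-- The symmetrised tensor `∑_σ a_{σ 0} ⊗ ⋯ ⊗ a_{σ (m-1)}`. -/
def tensSym (a : Fin m → Matrix I I R) : Matrix (Fin m → I) (Fin m → I) R :=
  ∑ σ : Equiv.Perm (Fin m), tens (a ∘ σ)

lemma tensSym_comp (a : Fin m → Matrix I I R) (τ : Equiv.Perm (Fin m)) :
    tensSym (a ∘ τ) = tensSym a := by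
  exact Equiv.sum_comp (Equiv.mulLeft τ) (fun σ : Equiv.Perm (Fin m) => tens (a ∘ σ))

variable [DecidableEq I]

variable (m) in
/-- The diagonal action `x ↦ ∑_k 1 ⊗ ⋯ ⊗ x ⊗ ⋯ ⊗ 1` of the Lie algebra of matrices. -/
def Dl : Matrix I I R →ₗ[R] Matrix (Fin m → I) (Fin m → I) R where
  toFun x := ∑ k : Fin m, tens (Function.update (fun _ => 1) k x)
  map_add' x y := by simp only [tens_update_add, Finset.sum_add_distrib]
  map_smul' c x := by simp only [tens_update_smul, Finset.smul_sum, RingHom.id_apply]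

lemma Dl_apply (x : Matrix I I R) :
    Dl m x = ∑ k : Fin m, tens (Function.update (fun _ => 1) k x) := rfl

variable [Fintype I]

lemma site_mul_tens (k : Fin m) (x : Matrix I I R) (A : Fin m → Matrix I I R) :
    tens (Function.update (fun _ => 1) k x) * tens A = tens (Function.update A k (x * A k)) := by
  rw [tens_mul]
  congr 1
  funext l
  by_cases h : l = k
  · subst h; simp
  · simp [Function.update_of_ne h]

lemma Dl_one : Dl m (1 : Matrix I I R) = (m : R) • 1 := by
  rw [Dl_apply, Finset.sum_congr rfl fun k _ => by
    rw [Function.update_eq_self k (fun _ : Fin m => (1 : Matrix I I R)), tens_one]]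
  simp [Algebra.smul_def]

lemma Dl_bracket (x y : Matrix I I R) :
    Dl m (x * y - y * x) = Dl m x * Dl m y - Dl m y * Dl m x := by
  have h : ∀ x y : Matrix I I R, Dl m x * Dl m y = Dl m (x * y) +
      ∑ k : Fin m, ∑ l ∈ Finset.univ.erase k,
        tens (Function.update (Function.update (fun _ => 1) l y) k x) := by
    intro x y
    rw [Dl_apply, Dl_apply, Dl_apply, Finset.sum_mul, ← Finset.sum_add_distrib]
    refine Finset.sum_congr rfl fun k _ => ?_
    rw [Finset.mul_sum, ← Finset.add_sum_erase _ _ (Finset.mem_univ k)]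
    congr 1
    · rw [site_mul_tens]; simp
    · refine Finset.sum_congr rfl fun l hl => ?_
      rw [site_mul_tens, Function.update_of_ne (Finset.ne_of_mem_erase hl).symm, mul_one]
  have hc : (∑ k : Fin m, ∑ l ∈ Finset.univ.erase k,
        tens (Function.update (Function.update (fun _ => 1) l y) k x)) =
      ∑ k : Fin m, ∑ l ∈ Finset.univ.erase k,
        tens (Function.update (Function.update (fun _ => 1) l x) k y) := by
    rw [Finset.sum_comm' (t' := Finset.univ) (s' := fun l => Finset.univ.erase l)
      (by intro a b; simp [eq_comm])]
    refine Finset.sum_congr rfl fun k _ => Finset.sum_congr rfl fun l hl => ?_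
    rw [Function.update_comm (Finset.ne_of_mem_erase hl)]
  rw [h x y, h y x, hc, map_sub]
  abel

lemma Dl_mul_tensSym (x : Matrix I I R) (a : Fin m → Matrix I I R) :
    Dl m x * tensSym a = ∑ j, tensSym (Function.update a j (x * a j)) := by
  simp only [tensSym, Dl_apply]
  rw [Finset.mul_sum, Finset.sum_comm]
  refine Finset.sum_congr rfl fun σ _ => ?_
  rw [Finset.sum_mul, ← Equiv.sum_comp σ (fun j => tens (Function.update a j (x * a j) ∘ σ))]
  refine Finset.sum_congr rfl fun k _ => ?_
  rw [site_mul_tens]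
  congr 1
  rw [Function.update_comp_equiv, Equiv.symm_apply_apply]
  rfl

end Tens

/-- Symmetrised tensors with entries in an associative algebra `G` are noncommutative polynomials
in the diagonal actions `Dl x`, `x ∈ G`. The induction is on the number of entries different
from `1`: multiplying the tensor in which one entry `x` has been replaced by `1` by `Dl x` gives a
positive multiple of the original one plus tensors with fewer nontrivial entries. -/
lemma tensSym_mem {m : ℕ} {I : Type*} [Fintype I] [DecidableEq I]
    (G : Subalgebra ℚ (Matrix I I ℚ)) (U : Subalgebra ℚ (Matrix (Fin m → I) (Fin m → I) ℚ))
    (hG : ∀ x ∈ G, Dl m x ∈ U) (a : Fin m → Matrix I I ℚ) (ha : ∀ i, a i ∈ G) : tensSym a ∈ U := by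
  have key : ∀ n, n ≤ m → ∀ a : Fin m → Matrix I I ℚ, (∀ i, a i ∈ G) →
      (∀ i : Fin m, n ≤ (i : ℕ) → a i = 1) → tensSym a ∈ U := by
    intro n
    induction n with
    | zero =>
      intro _ a _ h1
      obtain rfl : a = fun _ => 1 := funext fun i => h1 i (Nat.zero_le _)
      refine U.sum_mem fun σ _ => ?_
      change tens (fun _ => 1) ∈ U
      rw [tens_one]
      exact U.one_mem
    | succ n ih =>
      intro hn a ha h1
      let p : Fin m := ⟨n, hn⟩
      let a' := Function.update a p 1
      have ha'1 : ∀ i : Fin m, n ≤ (i : ℕ) → a' i = 1 := by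
        intro i hi
        by_cases h : i = p
        · subst h; simp [a']
        · rw [show a' i = a i from Function.update_of_ne h _ _]
          refine h1 i ?_
          have : (i : ℕ) ≠ n := fun e => h (Fin.ext e)
          omega
      have ha'G : ∀ i, a' i ∈ G := by
        intro i
        by_cases h : i = p
        · subst h; simp [a', G.one_mem]
        · rw [show a' i = a i from Function.update_of_ne h _ _]
          exact ha i
      have hs := Dl_mul_tensSym (a p) a'
      rw [← Finset.sum_filter_add_sum_filter_not _ (fun j : Fin m => n ≤ (j : ℕ))] at hs
      have hbig : ∀ j ∈ Finset.univ.filter (fun j : Fin m => n ≤ (j : ℕ)),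
          tensSym (Function.update a' j (a p * a' j)) = tensSym a := by
        intro j hj
        have hj' := (Finset.mem_filter.1 hj).2
        rw [ha'1 j hj', mul_one, ← tensSym_comp a (Equiv.swap j p)]
        congr 1
        funext i
        by_cases hij : i = j
        · subst hij; simp
        · rw [Function.update_of_ne hij, Function.comp_apply]
          by_cases hip : i = p
          · subst hip
            rw [Equiv.swap_apply_right, ha'1 p le_rfl]
            refine (h1 j ?_).symm
            have : (j : ℕ) ≠ n := fun e => hij (Fin.ext e.symm)
            omega
          · rw [Equiv.swap_apply_of_ne_of_ne hij hip]
            exact Function.update_of_ne hip _ _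
      have hsmall : ∀ j ∈ Finset.univ.filter (fun j : Fin m => ¬ n ≤ (j : ℕ)),
          tensSym (Function.update a' j (a p * a' j)) ∈ U := by
        intro j hj
        have hj' := (Finset.mem_filter.1 hj).2
        refine ih (by omega) _ (fun i => ?_) fun i hi => ?_
        · by_cases h : i = j
          · subst h
            rw [Function.update_self]
            exact G.mul_mem (ha p) (ha'G i)
          · rw [Function.update_of_ne h]
            exact ha'G i
        · rw [Function.update_of_ne (fun h : i = j => hj' (by rw [← h]; exact hi))]
          exact ha'1 i hi
      rw [Finset.sum_congr rfl hbig, Finset.sum_const] at hs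
      have hmem : (Finset.univ.filter (fun j : Fin m => n ≤ (j : ℕ))).card • tensSym a ∈ U := by
        rw [← sub_eq_of_eq_add hs]
        exact U.sub_mem (U.mul_mem (hG _ (ha p)) (ih (by omega) a' ha'G ha'1)) (U.sum_mem hsmall)
      have hc : ((Finset.univ.filter (fun j : Fin m => n ≤ (j : ℕ))).card : ℚ) ≠ 0 := by
        rw [Nat.cast_ne_zero]
        exact Finset.card_ne_zero_of_mem (a := p) (by simp [p])
      rw [← Nat.cast_smul_eq_nsmul ℚ] at hmem
      exact ((Subalgebra.toSubmodule U).smul_mem_iff hc).1 hmem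
  exact key m le_rfl a ha fun i hi => absurd i.2 (by omega)

/-! ### The classical commutant -/

section Classical

variable {r : ℕ}

/-- The matrix `E_{a,b} + E_{-a,-b}`, where `-a` stands for `Fin.rev a`. -/
def uu (a b : Idx r) : Matrix (Idx r) (Idx r) ℚ :=
  Matrix.single a b 1 + Matrix.single a.rev b.rev 1

/-- `η_i` and `η_j` lie in the same block of `V̄ = K η_bot ⊕ V ⊕ K η_top`. -/
def SameBlock (i j : Idx r) : Prop := i = j ∨ (innerI r i ∧ innerI r j)

lemma innerI_iff (i : Idx r) : innerI r i ↔ 0 < (i : ℕ) ∧ (i : ℕ) < 2 * r + 3 := by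
  have := i.2
  rw [innerI, Ne, Ne, Fin.ext_iff, Fin.ext_iff]
  simp only [botI, topI]
  omega

lemma innerI_rev {i : Idx r} : innerI r i.rev ↔ innerI r i := by
  rw [innerI_iff, innerI_iff, Fin.val_rev]
  omega

lemma SameBlock.symm {i j : Idx r} (h : SameBlock i j) : SameBlock j i :=
  h.imp Eq.symm And.symm

lemma SameBlock.trans {i j k : Idx r} (h : SameBlock i j) (h' : SameBlock j k) :
    SameBlock i k := by
  rcases h with rfl | h
  · exact h'
  · rcases h' with rfl | h'
    · exact .inr h
    · exact .inr ⟨h.1, h'.2⟩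

lemma sameBlock_rev {i j : Idx r} : SameBlock i.rev j.rev ↔ SameBlock i j := by
  rw [SameBlock, SameBlock, innerI_rev, innerI_rev, Fin.rev_inj]

lemma rev_ne_self (i : Idx r) : i.rev ≠ i := by
  rw [Ne, Fin.ext_iff, Fin.val_rev]
  omega

lemma uu_rev (a b : Idx r) : uu a.rev b.rev = uu a b := by
  rw [uu, uu, Fin.rev_rev, Fin.rev_rev, add_comm]

lemma single_mul_ite (a b c d : Idx r) :
    Matrix.single a b (1 : ℚ) * Matrix.single c d 1 = if b = c then Matrix.single a d 1 else 0 := by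
  split_ifs with h
  · subst h; simp
  · rw [Matrix.single_mul_single_of_ne _ _ _ _ h]

lemma uu_bracket (a b c : Idx r) (hab : a ≠ b) :
    uu a c * uu c b - uu c b * uu a c = uu a b - if b = a.rev then uu c c.rev else 0 := by
  have h1 := rev_ne_self c
  have h2 : (b.rev = a) = (b = a.rev) := by rw [Fin.rev_eq_iff]
  simp only [uu, add_mul, mul_add, single_mul_ite, Fin.rev_rev, Fin.rev_inj, h1, h1.symm, h2,
    hab.symm, if_true, if_false]
  split_ifs <;> abel

/-- The Lie algebra generated by the elements `uu` of adjacent inner indices, the differences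
`uu_{i,i} - uu_{i+1,i+1}` and the identity contains every `uu_{i,j}` with `i`, `j` in the same
block. -/
lemma uu_mem (L : Submodule ℚ (Matrix (Idx r) (Idx r) ℚ))
    (hL : ∀ x ∈ L, ∀ y ∈ L, x * y - y * x ∈ L) (h1 : 1 ∈ L)
    (hk : ∀ a : Fin (2*r+3), uu (loI a) (loI a) - uu (hiI a) (hiI a) ∈ L)
    (hB : ∀ a : Fin (2*r+3), 0 < (a : ℕ) → (a : ℕ) < 2*r+2 → uu (loI a) (hiI a) ∈ L)
    (i j : Idx r) (hij : SameBlock i j) : uu i j ∈ L := by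
  have hd : ∀ n (hn : n < 2*r+4), uu (botI r) (botI r) - uu ⟨n, hn⟩ ⟨n, hn⟩ ∈ L := by
    intro n
    induction n with
    | zero => intro _; rw [botI, sub_self]; exact L.zero_mem
    | succ n ih =>
      intro hn
      have := L.add_mem (ih (by omega)) (hk ⟨n, by omega⟩)
      rwa [loI, hiI, sub_add_sub_cancel] at this
  have hbot : uu (botI r) (botI r) ∈ L := by
    have hs : ∑ i : Idx r, uu i i = (2 : ℚ) • 1 := by
      have e1 : ∑ i : Idx r, Matrix.single i i (1 : ℚ) = 1 := by
        ext x y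
        rw [Matrix.sum_apply, Matrix.one_apply]
        simp [Matrix.single_apply, ite_and]
      have e2 := Equiv.sum_comp Fin.revPerm fun i : Idx r => Matrix.single i i (1 : ℚ)
      simp only [Fin.revPerm_apply] at e2
      simp only [uu, Finset.sum_add_distrib]
      rw [e2, e1, two_smul]
    have hm := L.add_mem (L.sum_mem fun (i : Idx r) (_ : i ∈ Finset.univ) => hd i.1 i.2)
      (L.smul_mem 2 h1)
    rw [Finset.sum_sub_distrib, hs, sub_add_cancel, Finset.sum_const, Finset.card_univ,
      Fintype.card_fin, ← Nat.cast_smul_eq_nsmul ℚ] at hm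
    exact (L.smul_mem_iff (Nat.cast_ne_zero.2 (by omega))).1 hm
  have hdiag : ∀ i : Idx r, uu i i ∈ L := fun i => by
    have := L.sub_mem hbot (hd i.1 i.2)
    rwa [sub_sub_cancel] at this
  have hoff : ∀ d : ℕ, ∀ a b : Idx r, innerI r a → innerI r b → (b : ℕ) = a + d + 1 →
      uu a b ∈ L := by
    intro d
    induction d using Nat.strong_induction_on with
    | _ d ih =>
    intro a b ha hb hab
    have ha' := (innerI_iff a).1 ha
    have hb' := (innerI_iff b).1 hb
    rcases Nat.eq_zero_or_pos d with rfl | hd0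
    · have := hB ⟨a, by omega⟩ ha'.1 (by simp only; omega)
      rwa [show hiI (⟨a, by omega⟩ : Fin (2*r+3)) = b from Fin.ext hab.symm] at this
    · let c : Idx r := ⟨b - 1, by omega⟩
      have hcv : (c : ℕ) = b - 1 := rfl
      have hc : innerI r c := (innerI_iff c).2 (by omega)
      have h2 := hL _ (ih (d - 1) (by omega) a c ha hc (by omega)) _
        (ih 0 hd0 c b hc hb (by omega))
      rw [uu_bracket a b c (by rw [Ne, Fin.ext_iff]; omega)] at h2
      split_ifs at h2 with hba
      · have hba' := congrArg Fin.val hba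
        rw [Fin.val_rev] at hba'
        have h3 : uu c c.rev ∈ L := by
          rw [← uu_rev, Fin.rev_rev]
          have hcr := Fin.val_rev c
          exact ih (d - 2) (by omega) c.rev c (innerI_rev.2 hc) hc (by omega)
        simpa using L.add_mem h2 h3
      · simpa using h2
  rcases hij with rfl | ⟨hi, hj⟩
  · exact hdiag i
  · rcases lt_trichotomy (i : ℕ) j with h | h | h
    · exact hoff (j - i - 1) i j hi hj (by omega)
    · rw [Fin.ext h]; exact hdiag j
    · rw [← uu_rev]
      have h1 := Fin.val_rev i
      have h2 := Fin.val_rev j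
      exact hoff (i - j - 1) _ _ (innerI_rev.2 hi) (innerI_rev.2 hj) (by omega)

variable (r) in
/-- The algebra of block matrices invariant under simultaneous reversal of rows and columns. -/
def blockAlg : Subalgebra ℚ (Matrix (Idx r) (Idx r) ℚ) where
  carrier := {x | (∀ i j, x i.rev j.rev = x i j) ∧ ∀ i j, x i j ≠ 0 → SameBlock i j}
  mul_mem' := by
    rintro x y ⟨hx, hx'⟩ ⟨hy, hy'⟩
    refine ⟨fun i j => ?_, fun i j h => ?_⟩
    · rw [Matrix.mul_apply, Matrix.mul_apply, ← Equiv.sum_comp Fin.revPerm]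
      exact Finset.sum_congr rfl fun k _ => by rw [Fin.revPerm_apply, hx, hy]
    · rw [Matrix.mul_apply] at h
      obtain ⟨k, _, hk⟩ := Finset.exists_ne_zero_of_sum_ne_zero h
      exact (hx' i k (left_ne_zero_of_mul hk)).trans (hy' k j (right_ne_zero_of_mul hk))
  add_mem' := by
    rintro x y ⟨hx, hx'⟩ ⟨hy, hy'⟩
    refine ⟨fun i j => by rw [Matrix.add_apply, Matrix.add_apply, hx, hy], fun i j h => ?_⟩
    by_cases h0 : x i j = 0
    · exact hy' i j fun h1 => h (by rw [Matrix.add_apply, h0, h1, add_zero])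
    · exact hx' i j h0
  algebraMap_mem' c := by
    refine ⟨fun i j => by simp [Matrix.algebraMap_matrix_apply], fun i j h => ?_⟩
    by_contra hij
    exact h (by rw [Matrix.algebraMap_matrix_apply, if_neg fun e => hij (.inl e)])

lemma uu_mem_blockAlg {i j : Idx r} (h : SameBlock i j) : uu i j ∈ blockAlg r := by
  refine ⟨fun a b => ?_, fun a b hab => ?_⟩
  · simp only [uu, Matrix.add_apply, Matrix.single_apply, Fin.rev_eq_iff, Fin.rev_rev]
    exact add_comm _ _
  · simp only [uu, Matrix.add_apply, Matrix.single_apply] at hab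
    by_cases h1 : i = a ∧ j = b
    · rwa [← h1.1, ← h1.2]
    · by_cases h2 : i.rev = a ∧ j.rev = b
      · rw [← h2.1, ← h2.2]
        exact sameBlock_rev.2 h
      · simp [h1, h2] at hab

lemma eq_sum_uu {x : Matrix (Idx r) (Idx r) ℚ} (hx : x ∈ blockAlg r) :
    x = (2⁻¹ : ℚ) • ∑ i, ∑ j, x i j • uu i j := by
  have e1 : ∑ i, ∑ j, x i j • Matrix.single i j (1 : ℚ) = x := by
    conv_rhs => rw [Matrix.matrix_eq_sum_single x]
    simp
  have e2 : ∑ i : Idx r, ∑ j : Idx r, x i j • Matrix.single i.rev j.rev (1 : ℚ) = x := by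
    conv_rhs => rw [← e1, ← Equiv.sum_comp Fin.revPerm]
    refine Finset.sum_congr rfl fun i _ => ?_
    rw [← Equiv.sum_comp Fin.revPerm fun j => x (Fin.revPerm i) j • Matrix.single (Fin.revPerm i) j 1]
    refine Finset.sum_congr rfl fun j _ => ?_
    rw [Fin.revPerm_apply, Fin.revPerm_apply, hx.1]
  simp only [uu, smul_add, Finset.sum_add_distrib]
  rw [e1, e2, ← smul_add, ← two_smul ℚ x, smul_smul]
  norm_num

variable {m : ℕ}

/-- Reversal of the entries of `f` at the positions in `T`. -/
def flipAt (T : Finset (Fin m)) (f : Fin m → Idx r) : Fin m → Idx r :=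
  fun k => if k ∈ T then (f k).rev else f k

/-- A matrix invariant under signed permutations is a combination of symmetrised tensors. -/
lemma eq_sum_tensSym (C : Matrix (Fin m → Idx r) (Fin m → Idx r) ℚ)
    (hperm : ∀ (σ : Equiv.Perm (Fin m)) g f, C (g ∘ σ) (f ∘ σ) = C g f)
    (hflip : ∀ T g f, C (flipAt T g) (flipAt T f) = C g f) :
    ((Nat.factorial m * 2 ^ m : ℕ) : ℚ) • C =
      ∑ g, ∑ f, C g f • tensSym fun k => uu (g k) (f k) := by
  ext a b
  have hprod : ∀ g f : Fin m → Idx r, ∏ k, uu (g k) (f k) (a k) (b k) =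
      ∑ T ∈ (Finset.univ : Finset (Fin m)).powerset,
        if flipAt T a = g ∧ flipAt T b = f then (1 : ℚ) else 0 := by
    intro g f
    simp only [uu, Matrix.add_apply, Matrix.single_apply]
    rw [Finset.prod_congr rfl fun k _ => add_comm _ _, Finset.prod_add]
    refine Finset.sum_congr rfl fun T _ => ?_
    have hiff : ((∀ k ∈ T, (g k).rev = a k ∧ (f k).rev = b k) ∧
        ∀ k ∈ Finset.univ \ T, g k = a k ∧ f k = b k) ↔ flipAt T a = g ∧ flipAt T b = f := ?_
    · rw [Finset.prod_ite_zero, Finset.prod_ite_zero, Finset.prod_const_one, Finset.prod_const_one,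
        if_congr hiff.symm rfl rfl]
      split_ifs with h1 h2 h3 h4 h5 <;> simp_all
    simp only [funext_iff, flipAt, Finset.mem_sdiff, Finset.mem_univ, true_and]
    constructor
    · rintro ⟨h1, h2⟩
      refine ⟨fun k => ?_, fun k => ?_⟩ <;> split_ifs with hk
      · rw [← (h1 k hk).1, Fin.rev_rev]
      · exact (h2 k hk).1.symm
      · rw [← (h1 k hk).2, Fin.rev_rev]
      · exact (h2 k hk).2.symm
    · rintro ⟨h1, h2⟩
      refine ⟨fun k hk => ?_, fun k hk => ?_⟩
      · have e1 := h1 k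
        have e2 := h2 k
        rw [if_pos hk] at e1 e2
        rw [← e1, ← e2, Fin.rev_rev, Fin.rev_rev]
        exact ⟨rfl, rfl⟩
      · have e1 := h1 k
        have e2 := h2 k
        rw [if_neg hk] at e1 e2
        exact ⟨e1.symm, e2.symm⟩
  have hone : ∑ g, ∑ f, C g f * ∏ k, uu (g k) (f k) (a k) (b k) = 2 ^ m * C a b := by
    simp only [hprod, Finset.mul_sum]
    rw [Finset.sum_congr rfl fun g _ => Finset.sum_comm, Finset.sum_comm]
    have hT : ∀ T ∈ (Finset.univ : Finset (Fin m)).powerset,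
        ∑ g, ∑ f, C g f * (if flipAt T a = g ∧ flipAt T b = f then (1 : ℚ) else 0) = C a b := by
      intro T _
      rw [Finset.sum_eq_single (flipAt T a) (fun g _ hg => by simp [hg.symm]) (by simp),
        Finset.sum_eq_single (flipAt T b) (fun g _ hg => by simp [hg.symm]) (by simp)]
      simp [hflip]
    rw [Finset.sum_congr rfl hT, Finset.sum_const, Finset.card_powerset]
    simp
  have hσ : ∀ σ : Equiv.Perm (Fin m),
      ∑ g, ∑ f, C g f * ∏ k, uu (g (σ k)) (f (σ k)) (a k) (b k) = 2 ^ m * C a b := by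
    intro σ
    rw [← hone]
    let e : (Fin m → Idx r) ≃ (Fin m → Idx r) := Equiv.arrowCongr σ.symm (Equiv.refl _)
    have he : ∀ g, e g = g ∘ σ := fun g => rfl
    conv_rhs => rw [← Equiv.sum_comp e]
    refine Finset.sum_congr rfl fun g _ => ?_
    rw [← Equiv.sum_comp e fun f => C (e g) f * ∏ k, uu (e g k) (f k) (a k) (b k)]
    refine Finset.sum_congr rfl fun f _ => ?_
    rw [he, he, hperm]
    rfl
  have hfin : ∀ g f : Fin m → Idx r, (C g f • tensSym fun k => uu (g k) (f k)) a b =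
      ∑ σ : Equiv.Perm (Fin m), C g f * ∏ k, uu (g (σ k)) (f (σ k)) (a k) (b k) := by
    intro g f
    rw [Matrix.smul_apply, tensSym, Matrix.sum_apply, smul_eq_mul, Finset.mul_sum]
    rfl
  rw [Matrix.sum_apply, Finset.sum_congr rfl fun g _ => by
    rw [Matrix.sum_apply, Finset.sum_congr rfl fun f _ => hfin g f, Finset.sum_comm],
    Finset.sum_comm, Finset.sum_congr rfl fun σ _ => hσ σ, Finset.sum_const, Finset.card_univ,
    Fintype.card_perm, Fintype.card_fin, Matrix.smul_apply]
  simp [mul_assoc]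

/-- An algebra containing the diagonal actions of the generating elements of `blockAlg` contains
the commutant of the signed permutations and of the block projections. -/
lemma classical_mem (U : Subalgebra ℚ (Matrix (Fin m → Idx r) (Fin m → Idx r) ℚ))
    (hk : ∀ a : Fin (2*r+3), Dl m (uu (loI a) (loI a) - uu (hiI a) (hiI a)) ∈ U)
    (hB : ∀ a : Fin (2*r+3), 0 < (a : ℕ) → (a : ℕ) < 2*r+2 → Dl m (uu (loI a) (hiI a)) ∈ U)
    (C : Matrix (Fin m → Idx r) (Fin m → Idx r) ℚ)
    (hperm : ∀ (σ : Equiv.Perm (Fin m)) g f, C (g ∘ σ) (f ∘ σ) = C g f)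
    (hflip : ∀ T g f, C (flipAt T g) (flipAt T f) = C g f)
    (hblock : ∀ g f, C g f ≠ 0 → ∀ k, SameBlock (g k) (f k)) : C ∈ U := by
  let L : Submodule ℚ (Matrix (Idx r) (Idx r) ℚ) := (Subalgebra.toSubmodule U).comap (Dl m)
  have hL : ∀ i j : Idx r, SameBlock i j → uu i j ∈ L := by
    refine uu_mem L (fun x hx y hy => ?_) ?_ hk hB
    · change Dl m _ ∈ U
      rw [Dl_bracket]
      exact U.sub_mem (U.mul_mem hx hy) (U.mul_mem hy hx)
    · change Dl m _ ∈ U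
      rw [Dl_one]
      exact U.smul_mem U.one_mem _
  have hG : ∀ x ∈ blockAlg r, Dl m x ∈ U := by
    intro x hx
    change x ∈ L
    rw [eq_sum_uu hx]
    refine L.smul_mem _ (L.sum_mem fun i _ => L.sum_mem fun j _ => ?_)
    by_cases h0 : x i j = 0
    · rw [h0, zero_smul]; exact L.zero_mem
    · exact L.smul_mem _ (hL i j (hx.2 i j h0))
  have hs : ((Nat.factorial m * 2 ^ m : ℕ) : ℚ) • C ∈ U := by
    rw [eq_sum_tensSym C hperm hflip]
    refine U.sum_mem fun g _ => U.sum_mem fun f _ => ?_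
    by_cases h0 : C g f = 0
    · rw [h0, zero_smul]; exact U.zero_mem
    · exact U.smul_mem (tensSym_mem (blockAlg r) U hG _ fun k =>
        uu_mem_blockAlg (hblock g f h0 k)) _
  exact ((Subalgebra.toSubmodule U).smul_mem_iff (Nat.cast_ne_zero.2
    (Nat.mul_ne_zero (Nat.factorial_ne_zero m) (by positivity)))).1 hs

end Classical

/-! ### Matrices of the operators -/

section Operators

variable {r m : ℕ}

variable (r m) in
/-- The matrix of an operator with respect to the basis `M_f`. -/
def matE : Module.End Kq (TP r m) ≃ₐ[Kq] Matrix (Fin m → Idx r) (Fin m → Idx r) Kq :=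
  LinearMap.toMatrixAlgEquiv'

lemma matE_apply (A : Module.End Kq (TP r m)) (g f : Fin m → Idx r) :
    matE r m A g f = A (Mf f) g := LinearMap.toMatrixAlgEquiv'_apply _ _ _

/-- The matrix of an operator on `V̄` with respect to the basis `η_j`. -/
def matS (A : Module.End Kq (Vb r)) : Matrix (Idx r) (Idx r) Kq := LinearMap.toMatrixAlgEquiv' A

lemma matS_apply (A : Module.End Kq (Vb r)) (x y : Idx r) :
    matS A x y = A (Pi.single y 1) x := LinearMap.toMatrixAlgEquiv'_apply _ _ _

lemma matS_one : matS (1 : Module.End Kq (Vb r)) = 1 := map_one LinearMap.toMatrixAlgEquiv'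

lemma matE_tensorOp (A : Fin m → Module.End Kq (Vb r)) :
    matE r m (tensorOp r m A) = tens fun k => matS (A k) := by
  ext g f
  rw [matE_apply, tens_apply]
  change ∑ h, _ * Mf f h = _
  rw [Finset.sum_eq_single f (fun h _ hh => by rw [Mf, Pi.single_eq_of_ne hh, mul_zero])
    (by simp), Mf, Pi.single_eq_same, mul_one]
  exact Finset.prod_congr rfl fun k _ => (matS_apply _ _ _).symm

lemma matS_opE (a : Fin (2*r+3)) (x y : Idx r) :
    matS (opE r a) x y = if x = loI a ∧ y = hiI a then 1 else 0 := by
  rw [matS_apply]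
  change (if x = loI a then (1 : Kq) else 0) *
    (Pi.single y 1 : Idx r → Kq) (if x = loI a then hiI a else x) = _
  by_cases h : x = loI a <;> simp [h, Pi.single_apply, eq_comm]

lemma matS_opF (a : Fin (2*r+3)) (x y : Idx r) :
    matS (opF r a) x y = if x = hiI a ∧ y = loI a then 1 else 0 := by
  rw [matS_apply]
  change (if x = hiI a then (1 : Kq) else 0) *
    (Pi.single y 1 : Idx r → Kq) (if x = hiI a then loI a else x) = _
  by_cases h : x = hiI a <;> simp [h, Pi.single_apply, eq_comm]

/-- The eigenvalue of `κ_a` on `η_x`. -/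
def kv (a : Fin (2*r+3)) (x : Idx r) : Kq :=
  if x = loI a then qv else if x = hiI a then qv⁻¹ else 1

/-- The eigenvalue of `κ_a⁻¹` on `η_x`. -/
def kvi (a : Fin (2*r+3)) (x : Idx r) : Kq :=
  if x = loI a then qv⁻¹ else if x = hiI a then qv else 1

lemma matS_opK (a : Fin (2*r+3)) : matS (opK r a) = Matrix.diagonal (kv a) := by
  ext x y
  rw [matS_apply, Matrix.diagonal_apply]
  change kv a x * (Pi.single y 1 : Idx r → Kq) x = _
  simp [Pi.single_apply]

lemma matS_opKinv (a : Fin (2*r+3)) : matS (opKinv r a) = Matrix.diagonal (kvi a) := by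
  ext x y
  rw [matS_apply, Matrix.diagonal_apply]
  change kvi a x * (Pi.single y 1 : Idx r → Kq) x = _
  simp [Pi.single_apply]

/-- The tensor factors of the `j`-th summand of `𝔼_a`. -/
def famE (a : Fin (2*r+3)) (j k : Fin m) : Matrix (Idx r) (Idx r) Kq :=
  if (k : ℕ) < j then 1 else if k = j then matS (opE r a) else matS (opKinv r a)

/-- The tensor factors of the `j`-th summand of `𝔽_a`. -/
def famF (a : Fin (2*r+3)) (j k : Fin m) : Matrix (Idx r) (Idx r) Kq :=
  if (k : ℕ) < j then matS (opK r a) else if k = j then matS (opF r a) else 1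

lemma matE_opEE (a : Fin (2*r+3)) : matE r m (opEE r m a) = ∑ j, tens (famE a j) := by
  rw [opEE, map_sum]
  refine Finset.sum_congr rfl fun j _ => ?_
  rw [matE_tensorOp]
  congr 1
  funext k
  simp only [famE]
  split_ifs <;> first | rfl | exact matS_one

lemma matE_opFF (a : Fin (2*r+3)) : matE r m (opFF r m a) = ∑ j, tens (famF a j) := by
  rw [opFF, map_sum]
  refine Finset.sum_congr rfl fun j _ => ?_
  rw [matE_tensorOp]
  congr 1
  funext k
  simp only [famF]
  split_ifs <;> first | rfl | exact matS_one

lemma matE_opKK (a : Fin (2*r+3)) :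
    matE r m (opKK r m a) = tens fun _ => Matrix.diagonal (kv a) := by
  rw [opKK, matE_tensorOp, matS_opK]

lemma matE_opKKinv (a : Fin (2*r+3)) :
    matE r m (opKKinv r m a) = tens fun _ => Matrix.diagonal (kvi a) := by
  rw [opKKinv, matE_tensorOp, matS_opKinv]

/-! ### Values of the ıquantum group generators at `q = 1` -/

lemma MVal.tens {A : Fin m → Matrix (Idx r) (Idx r) Kq} {B : Fin m → Matrix (Idx r) (Idx r) ℚ}
    (h : ∀ k, MVal (A k) (B k)) : MVal (tens A) (tens B) := fun g f => by
  rw [tens_apply, tens_apply]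
  exact HasVal.prod _ fun k _ => h k (g k) (f k)

lemma hasDer_kv (a : Fin (2*r+3)) (x : Idx r) :
    HasDer (kv a x) (if x = loI a then 1 else if x = hiI a then -1 else 0) := by
  rw [kv]
  split_ifs
  exacts [HasDer.q, HasDer.qinv, HasDer.one]

lemma hasDer_kvi (a : Fin (2*r+3)) (x : Idx r) :
    HasDer (kvi a x) (if x = loI a then -1 else if x = hiI a then 1 else 0) := by
  rw [kvi]
  split_ifs
  exacts [HasDer.qinv, HasDer.q, HasDer.one]

lemma MVal.diagonal {n : Type*} [DecidableEq n] {w : n → Kq} {c : n → ℚ}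
    (h : ∀ x, HasVal (w x) (c x)) : MVal (Matrix.diagonal w) (Matrix.diagonal c) := fun x y => by
  rw [Matrix.diagonal_apply, Matrix.diagonal_apply]
  exact (h x).ite HasVal.zero

lemma mval_opK (a : Fin (2*r+3)) : MVal (matS (opK r a)) 1 := by
  rw [matS_opK, ← Matrix.diagonal_one]
  exact MVal.diagonal fun x => (hasDer_kv a x).val

lemma mval_opKinv (a : Fin (2*r+3)) : MVal (matS (opKinv r a)) 1 := by
  rw [matS_opKinv, ← Matrix.diagonal_one]
  exact MVal.diagonal fun x => (hasDer_kvi a x).val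

lemma mval_opE (a : Fin (2*r+3)) : MVal (matS (opE r a)) (Matrix.single (loI a) (hiI a) 1) := by
  intro x y
  rw [matS_opE, Matrix.single_apply]
  simp only [eq_comm (a := loI a), eq_comm (a := hiI a)]
  exact HasVal.one.ite HasVal.zero

lemma mval_opF (a : Fin (2*r+3)) : MVal (matS (opF r a)) (Matrix.single (hiI a) (loI a) 1) := by
  intro x y
  rw [matS_opF, Matrix.single_apply]
  simp only [eq_comm (a := loI a), eq_comm (a := hiI a)]
  exact HasVal.one.ite HasVal.zero

lemma mval_opEE (a : Fin (2*r+3)) :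
    MVal (matE r m (opEE r m a)) (Dl m (Matrix.single (loI a) (hiI a) 1)) := by
  rw [matE_opEE, Dl_apply]
  refine MVal.sum _ fun j _ => MVal.tens fun k => ?_
  rw [famE]
  split_ifs with h1 h2
  · rw [Function.update_of_ne (by rintro rfl; omega)]; exact MVal.one
  · rw [h2, Function.update_self]; exact mval_opE a
  · rw [Function.update_of_ne h2]; exact mval_opKinv a

lemma mval_opFF (a : Fin (2*r+3)) :
    MVal (matE r m (opFF r m a)) (Dl m (Matrix.single (hiI a) (loI a) 1)) := by
  rw [matE_opFF, Dl_apply]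
  refine MVal.sum _ fun j _ => MVal.tens fun k => ?_
  rw [famF]
  split_ifs with h1 h2
  · rw [Function.update_of_ne (by rintro rfl; omega)]; exact mval_opK a
  · rw [h2, Function.update_self]; exact mval_opF a
  · rw [Function.update_of_ne h2]; exact MVal.one

lemma mval_opKKinv (a : Fin (2*r+3)) : MVal (matE r m (opKKinv r m a)) 1 := by
  rw [opKKinv, matE_tensorOp, ← tens_one]
  exact MVal.tens fun _ => mval_opKinv a

lemma loI_rev (a : Fin (2*r+3)) : loI a.rev = (hiI a).rev := by
  rw [Fin.ext_iff, Fin.val_rev]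
  simp only [loI, hiI, Fin.val_rev]
  omega

lemma hiI_rev (a : Fin (2*r+3)) : hiI a.rev = (loI a).rev := by
  rw [Fin.ext_iff, Fin.val_rev]
  simp only [loI, hiI, Fin.val_rev]
  omega

lemma midI_rev : (midI r).rev = midI r := by
  rw [Fin.ext_iff, Fin.val_rev]
  simp only [midI]
  omega

lemma mval_opB (a : Fin (2*r+3)) :
    MVal (matE r m (opB r m a)) (Dl m (uu (loI a) (hiI a))) := by
  have h := (mval_opEE (m := m) a).add ((mval_opFF (m := m) a.rev).mul (mval_opKKinv (m := m) a))
  rwa [mul_one, ← map_add, loI_rev, hiI_rev, ← map_mul, ← map_add] at h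

lemma mval_opB0 :
    MVal (matE r m (opB0 r m - 1)) (Dl m (uu (loI (midI r)) (hiI (midI r)))) := by
  have h := (((mval_opEE (m := m) (midI r)).add (MVal.smul HasVal.q
    ((mval_opFF (m := m) (midI r).rev).mul (mval_opKKinv (m := m) (midI r))))).add
    (mval_opKKinv (midI r))).sub MVal.one
  rw [mul_one, one_smul, loI_rev, hiI_rev, midI_rev, add_sub_cancel_right, ← map_add] at h
  rw [opB0, map_sub, map_add, map_add, map_smul, map_mul, map_one]
  exact h

lemma tens_diagonal {R : Type*} [CommRing R] (w : Idx r → R) :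
    tens (fun _ : Fin m => Matrix.diagonal w) = Matrix.diagonal fun g => ∏ k, w (g k) := by
  ext g f
  rw [tens_apply, Matrix.diagonal_apply]
  simp only [Matrix.diagonal_apply]
  rw [Finset.prod_ite_zero]
  simp [funext_iff]

lemma Dl_diagonal (d : Idx r → ℚ) :
    Dl m (Matrix.diagonal d) = Matrix.diagonal fun g => ∑ k, d (g k) := by
  ext g f
  have h : ∀ k : Fin m, tens (Function.update (fun _ => 1) k (Matrix.diagonal d)) g f =
      if g = f then d (g k) else 0 := by
    intro k
    have h1 : ∀ l, Function.update (fun _ => (1 : Matrix (Idx r) (Idx r) ℚ)) k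
        (Matrix.diagonal d) l (g l) (f l) = if g l = f l then (if l = k then d (g k) else 1) else 0 := by
      intro l
      by_cases hl : l = k
      · subst hl; simp [Matrix.diagonal_apply]
      · rw [Function.update_of_ne hl, Matrix.one_apply, if_neg hl]
    rw [tens_apply, Finset.prod_congr rfl fun l _ => h1 l, Finset.prod_ite_zero]
    simp [funext_iff]
  rw [Dl_apply, Matrix.sum_apply, Finset.sum_congr rfl fun k _ => h k, Matrix.diagonal_apply]
  split_ifs <;> simp

lemma matE_opkk (a : Fin (2*r+3)) : matE r m (opkk r m a) =
    Matrix.diagonal fun g => ∏ k, kv a (g k) * kvi a.rev (g k) := by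
  rw [opkk, map_mul, matE_opKK, matE_opKKinv, tens_mul]
  simp only [Matrix.diagonal_mul_diagonal]
  rw [tens_diagonal]

lemma loI_ne_hiI (a : Fin (2*r+3)) : loI a ≠ hiI a := by
  rw [Ne, Fin.ext_iff]
  simp only [loI, hiI]
  omega

lemma mval_opkk (a : Fin (2*r+3)) : MVal (matE r m ((qv - 1)⁻¹ • (opkk r m a - 1)))
    (Dl m (uu (loI a) (loI a) - uu (hiI a) (hiI a))) := by
  have hd : uu (loI a) (loI a) - uu (hiI a) (hiI a) = Matrix.diagonal fun x =>
      (if x = loI a then 1 else if x = hiI a then -1 else 0) +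
      (if x = loI a.rev then -1 else if x = hiI a.rev then 1 else 0) := by
    have h1 := loI_ne_hiI a
    have h2 := loI_ne_hiI a.rev
    rw [uu, uu, ← loI_rev, ← hiI_rev]
    ext x y
    simp only [Matrix.sub_apply, Matrix.add_apply, Matrix.single_apply, Matrix.diagonal_apply]
    by_cases hxy : x = y
    · subst hxy
      simp only [and_self, if_true, eq_comm (a := loI _), eq_comm (a := hiI _)]
      split_ifs <;> simp_all
    · have : ∀ z : Idx r, ¬ (z = x ∧ z = y) := fun z h => hxy (h.1.symm.trans h.2)
      simp [this, hxy]
  rw [hd, Dl_diagonal, map_smul, map_sub, map_one, matE_opkk]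
  intro g f
  rw [Matrix.smul_apply, Matrix.sub_apply, Matrix.diagonal_apply, Matrix.diagonal_apply,
    Matrix.one_apply]
  split_ifs with h
  · rw [smul_eq_mul, mul_comm, ← div_eq_mul_inv]
    exact HasDer.prod _ fun k _ => (hasDer_kv a (g k)).mul (hasDer_kvi a.rev (g k))
  · simpa using HasVal.zero

variable (r m) in
/-- The values at `q = 1` of the elements of `Φ(L_q^ı)` that are regular there. -/
def valPhi : Subalgebra ℚ (Matrix (Fin m → Idx r) (Fin m → Idx r) ℚ) where
  carrier := {C | ∃ Y ∈ PhiL r m, MVal (matE r m Y) C}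
  mul_mem' := by
    rintro _ _ ⟨Y, hY, h⟩ ⟨Y', hY', h'⟩
    exact ⟨Y * Y', mul_mem hY hY', by rw [map_mul]; exact h.mul h'⟩
  add_mem' := by
    rintro _ _ ⟨Y, hY, h⟩ ⟨Y', hY', h'⟩
    exact ⟨Y + Y', add_mem hY hY', by rw [map_add]; exact h.add h'⟩
  algebraMap_mem' c := by
    refine ⟨algebraMap Kq _ (algebraMap ℚ Kq c), Subalgebra.algebraMap_mem _ _, ?_⟩
    rw [AlgEquiv.commutes, Algebra.algebraMap_eq_smul_one,
      Algebra.algebraMap_eq_smul_one (A := Matrix (Fin m → Idx r) (Fin m → Idx r) ℚ)]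
    exact MVal.smul (HasVal.const c) MVal.one

/-- The commutant of the signed permutations and of the block projections consists of values at
`q = 1` of elements of `Φ(L_q^ı)`. -/
lemma mem_valPhi (C : Matrix (Fin m → Idx r) (Fin m → Idx r) ℚ)
    (hperm : ∀ (σ : Equiv.Perm (Fin m)) g f, C (g ∘ σ) (f ∘ σ) = C g f)
    (hflip : ∀ T g f, C (flipAt T g) (flipAt T f) = C g f)
    (hblock : ∀ g f, C g f ≠ 0 → ∀ k, SameBlock (g k) (f k)) : C ∈ valPhi r m := by
  refine classical_mem _ (fun a => ?_) (fun a ha ha' => ?_) C hperm hflip hblock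
  · refine ⟨_, Subalgebra.smul_mem _ (sub_mem (Algebra.subset_adjoin ?_) (one_mem _)) _, mval_opkk a⟩
    exact .inl (.inr ⟨a, rfl⟩)
  · by_cases hmid : a = midI r
    · rw [hmid]
      refine ⟨_, sub_mem (Algebra.subset_adjoin ?_) (one_mem _), mval_opB0⟩
      exact .inl (.inl (.inl rfl))
    · refine ⟨_, Algebra.subset_adjoin ?_, mval_opB a⟩
      exact .inl (.inl (.inr ⟨a, ⟨hmid, ha, ha'⟩, rfl⟩))

end Operators

/-! ### The Hecke generators commute with the ıquantum group -/

section Commutation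

variable {r m : ℕ}

/-- The matrix of `v ↦ (g ↦ v (τ g) + α g * v g)`; each `Ψ(H_i)` has this shape. -/
def reflM {X : Type*} [DecidableEq X] (τ : X → X) (α : X → Kq) : Matrix X X Kq :=
  Matrix.of fun g f => (if τ g = f then 1 else 0) + if g = f then α g else 0

lemma reflM_mul {X : Type*} [Fintype X] [DecidableEq X] (τ : X → X) (α : X → Kq)
    (Y : Matrix X X Kq) (g f : X) : (reflM τ α * Y) g f = Y (τ g) f + α g * Y g f := by
  simp [reflM, Matrix.mul_apply, add_mul, Finset.sum_add_distrib]

lemma mul_reflM {X : Type*} [Fintype X] [DecidableEq X] (τ : X → X) (hτ : ∀ x, τ (τ x) = x)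
    (α : X → Kq) (Y : Matrix X X Kq) (g f : X) :
    (Y * reflM τ α) g f = Y g (τ f) + α f * Y g f := by
  have h : ∀ x, (τ x = f) = (x = τ f) := fun x => propext
    ⟨fun e => by rw [← e, hτ], fun e => by rw [e, hτ]⟩
  simp [reflM, Matrix.mul_apply, mul_add, Finset.sum_add_distrib, h, mul_comm]

/-- A sum of pure tensors which agree outside the positions `P` commutes with an operator acting on
the positions `P` as soon as the factors at these positions do. -/
lemma local_comm (P : Finset (Fin m)) (τ : (Fin m → Idx r) → (Fin m → Idx r))
    (hτ : ∀ x, τ (τ x) = x) (α : (Fin m → Idx r) → Kq) (hP : ∀ g, ∀ k ∉ P, τ g k = g k)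
    {ι : Type*} (J : Finset ι) (A : ι → Fin m → Matrix (Idx r) (Idx r) Kq)
    (A₀ : Fin m → Matrix (Idx r) (Idx r) Kq) (hA : ∀ j ∈ J, ∀ k ∉ P, A j k = A₀ k)
    (hz : ∀ g f : Fin m → Idx r,
      ∑ j ∈ J, ∏ k ∈ P, A j k (τ g k) (f k) + α g * ∑ j ∈ J, ∏ k ∈ P, A j k (g k) (f k) =
      ∑ j ∈ J, ∏ k ∈ P, A j k (g k) (τ f k) + α f * ∑ j ∈ J, ∏ k ∈ P, A j k (g k) (f k)) :
    Commute (∑ j ∈ J, tens (A j)) (reflM τ α) := by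
  have h : ∀ g f : Fin m → Idx r, (∑ j ∈ J, tens (A j)) g f =
      (∑ j ∈ J, ∏ k ∈ P, A j k (g k) (f k)) * ∏ k ∈ Pᶜ, A₀ k (g k) (f k) := by
    intro g f
    rw [Matrix.sum_apply, Finset.sum_mul]
    refine Finset.sum_congr rfl fun j hj => ?_
    rw [tens_apply, ← Finset.prod_mul_prod_compl P]
    congr 1
    exact Finset.prod_congr rfl fun k hk => by rw [hA j hj k (Finset.mem_compl.1 hk)]
  have h1 : ∀ g f : Fin m → Idx r, ∏ k ∈ Pᶜ, A₀ k (τ g k) (f k) = ∏ k ∈ Pᶜ, A₀ k (g k) (f k) := fun g f =>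
    Finset.prod_congr rfl fun k hk => by rw [hP g k (Finset.mem_compl.1 hk)]
  have h2 : ∀ g f : Fin m → Idx r, ∏ k ∈ Pᶜ, A₀ k (g k) (τ f k) = ∏ k ∈ Pᶜ, A₀ k (g k) (f k) := fun g f =>
    Finset.prod_congr rfl fun k hk => by rw [hP f k (Finset.mem_compl.1 hk)]
  ext g f
  rw [reflM_mul, mul_reflM τ hτ, h, h, h, h1, h2, ← mul_assoc, ← mul_assoc, ← add_mul, ← add_mul,
    hz]

/-- The diagonal coefficient of `Ψ(H_i)`, `i ≥ 1`, at a pair of adjacent entries. -/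
def alS (x y : Idx r) : Kq := if x = y then qv⁻¹ - 1 else if y < x then qv⁻¹ - qv else 0

/-- The diagonal coefficient of `Ψ(H_0)` at the first entry. -/
def al0 (x : Idx r) : Kq := if x < x.rev then qv⁻¹ - qv else 0

lemma matE_Rsw (p : ℕ) (h : p + 1 < m) : matE r m (Rsw r m p) =
    reflM (fun g : Fin m → Idx r => g ∘ Equiv.swap ⟨p, by omega⟩ ⟨p+1, h⟩)
      (fun g => alS (g ⟨p, by omega⟩) (g ⟨p+1, h⟩)) := by
  ext g f
  rw [matE_apply, Rsw, dif_pos h]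
  change (if g ⟨p, by omega⟩ = g ⟨p+1, h⟩ then qv⁻¹ * Mf f g
        else Mf f (g ∘ Equiv.swap ⟨p, by omega⟩ ⟨p+1, h⟩) +
          (if g ⟨p+1, h⟩ < g ⟨p, by omega⟩ then (qv⁻¹ - qv) * Mf f g else 0)) = _
  rw [reflM, Matrix.of_apply, alS]
  simp only [Mf, Pi.single_apply]
  by_cases h1 : g ⟨p, by omega⟩ = g ⟨p+1, h⟩
  · have hg : g ∘ Equiv.swap ⟨p, by omega⟩ ⟨p+1, h⟩ = g := by
      funext k
      rw [Function.comp_apply]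
      by_cases hk : k = ⟨p, by omega⟩
      · rw [hk, Equiv.swap_apply_left, h1]
      · by_cases hl : k = ⟨p+1, h⟩
        · rw [hl, Equiv.swap_apply_right, h1]
        · rw [Equiv.swap_apply_of_ne_of_ne hk hl]
    rw [if_pos h1, if_pos h1, hg]
    split_ifs <;> simp
  · rw [if_neg h1, if_neg h1]
    split_ifs <;> simp

lemma matE_R0 (h : 0 < m) : matE r m (R0op r m) =
    reflM (fun g : Fin m → Idx r => Function.update g ⟨0, h⟩ (g ⟨0, h⟩).rev) (fun g => al0 (g ⟨0, h⟩)) := by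
  ext g f
  rw [matE_apply, R0op, dif_pos h]
  change Mf f (Function.update g ⟨0, h⟩ (Fin.rev (g ⟨0, h⟩))) +
    (if g ⟨0, h⟩ < Fin.rev (g ⟨0, h⟩) then (qv⁻¹ - qv) * Mf f g else 0) = _
  rw [reflM, Matrix.of_apply, al0]
  simp only [Mf, Pi.single_apply]
  split_ifs <;> simp

/-- Two-site form of the commutation with `Ψ(H_i)`, `i ≥ 1`: `z` lists the matrix entries of an
operator on `V̄ ⊗ V̄`. -/
def Comm2 (z : Idx r → Idx r → Idx r → Idx r → Kq) : Prop := ∀ x₁ x₂ y₁ y₂,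
  z x₂ x₁ y₁ y₂ + alS x₁ x₂ * z x₁ x₂ y₁ y₂ = z x₁ x₂ y₂ y₁ + alS y₁ y₂ * z x₁ x₂ y₁ y₂

lemma sw_comm (p : ℕ) (h : p + 1 < m) {ι : Type*} (J : Finset ι)
    (A : ι → Fin m → Matrix (Idx r) (Idx r) Kq) (A₀ : Fin m → Matrix (Idx r) (Idx r) Kq)
    (hA : ∀ j ∈ J, ∀ k : Fin m, (k : ℕ) ≠ p → (k : ℕ) ≠ p + 1 → A j k = A₀ k)
    (hz : Comm2 fun x₁ x₂ y₁ y₂ =>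
      ∑ j ∈ J, A j ⟨p, by omega⟩ x₁ y₁ * A j ⟨p+1, h⟩ x₂ y₂) :
    Commute (∑ j ∈ J, tens (A j)) (matE r m (Rsw r m p)) := by
  rw [matE_Rsw p h]
  have hne : (⟨p, by omega⟩ : Fin m) ≠ ⟨p+1, h⟩ := by rw [Ne, Fin.mk.injEq]; omega
  refine local_comm {⟨p, by omega⟩, ⟨p+1, h⟩} _ (fun x => ?_) _ (fun g k hk => ?_) J A A₀
    (fun j hj k hk => ?_) fun g f => ?_
  · funext k; simp
  · simp only [Finset.mem_insert, Finset.mem_singleton, not_or] at hk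
    rw [Function.comp_apply, Equiv.swap_apply_of_ne_of_ne hk.1 hk.2]
  · simp only [Finset.mem_insert, Finset.mem_singleton, not_or, Fin.ext_iff] at hk
    exact hA j hj k hk.1 hk.2
  · simp only [Finset.prod_pair hne, Function.comp_apply, Equiv.swap_apply_left,
      Equiv.swap_apply_right]
    exact hz _ _ _ _

lemma zero_comm (h : 0 < m) {ι : Type*} (J : Finset ι)
    (A : ι → Fin m → Matrix (Idx r) (Idx r) Kq) (A₀ : Fin m → Matrix (Idx r) (Idx r) Kq)
    (hA : ∀ j ∈ J, ∀ k : Fin m, (k : ℕ) ≠ 0 → A j k = A₀ k)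
    (hz : ∀ x y : Idx r, ∑ j ∈ J, A j ⟨0, h⟩ x.rev y + al0 x * ∑ j ∈ J, A j ⟨0, h⟩ x y =
      ∑ j ∈ J, A j ⟨0, h⟩ x y.rev + al0 y * ∑ j ∈ J, A j ⟨0, h⟩ x y) :
    Commute (∑ j ∈ J, tens (A j)) (matE r m (R0op r m)) := by
  rw [matE_R0 h]
  refine local_comm {⟨0, h⟩} _ (fun x => ?_) _ (fun g k hk => ?_) J A A₀
    (fun j hj k hk => ?_) fun g f => ?_
  · simp
  · rw [Finset.mem_singleton] at hk
    exact Function.update_of_ne hk _ _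
  · rw [Finset.mem_singleton, Fin.ext_iff] at hk
    exact hA j hj k hk
  · simp only [Finset.prod_singleton, Function.update_self]
    exact hz _ _

lemma comm2_diagonal (w : Idx r → Kq) : Comm2 fun x₁ x₂ y₁ y₂ =>
    Matrix.diagonal w x₁ y₁ * Matrix.diagonal w x₂ y₂ := by
  intro x₁ x₂ y₁ y₂
  simp only [Matrix.diagonal_apply]
  by_cases h1 : x₁ = y₁ <;> by_cases h2 : x₂ = y₂ <;> by_cases h3 : x₁ = y₂ <;>
    by_cases h4 : x₂ = y₁ <;> simp_all [mul_comm]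

lemma comm2_E (a : Fin (2*r+3)) : Comm2 fun x₁ x₂ y₁ y₂ =>
    matS (opE r a) x₁ y₁ * matS (opKinv r a) x₂ y₂ +
      (1 : Matrix (Idx r) (Idx r) Kq) x₁ y₁ * matS (opE r a) x₂ y₂ := by
  have hq := qv_ne_zero
  have hlt : loI a < hiI a := by rw [Fin.lt_def]; simp [loI, hiI]
  have hne := loI_ne_hiI a
  have hc : ∀ c : Idx r, c ≠ loI a → c ≠ hiI a → ((c < loI a ↔ c < hiI a) ∧ (loI a < c ↔ hiI a < c)) := by
    intro c h1 h2
    rw [Ne, Fin.ext_iff] at h1 h2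
    simp only [loI, hiI, Fin.lt_def] at *
    omega
  intro x₁ x₂ y₁ y₂
  simp only [matS_opKinv, matS_opE, Matrix.diagonal_apply, Matrix.one_apply, alS, kvi]
  generalize loI a = lo at *
  generalize hiI a = hi at *
  have hne' : hi ≠ lo := hne.symm
  have key : ∀ c, c ≠ lo → c ≠ hi → lo ≠ c ∧ hi ≠ c ∧ (c < lo ↔ c < hi) ∧ (lo < c ↔ hi < c) :=
    fun c h1 h2 => ⟨h1.symm, h2.symm, hc c h1 h2⟩
  have hi2 : qv⁻¹ * qv = 1 := inv_mul_cancel₀ hq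
  have hgt := hlt.not_gt
  clear hc
  by_cases h1 : y₁ = hi <;> by_cases h2 : y₂ = hi <;> by_cases h3 : x₁ = lo <;>
    by_cases h4 : x₂ = lo <;> by_cases h5 : x₁ = y₂ <;> by_cases h6 : x₂ = y₂ <;>
    by_cases h7 : x₁ = y₁ <;> by_cases h8 : x₂ = y₁ <;> (try subst_vars) <;> grind

lemma comm2_F (a : Fin (2*r+3)) : Comm2 fun x₁ x₂ y₁ y₂ =>
    matS (opF r a) x₁ y₁ * (1 : Matrix (Idx r) (Idx r) Kq) x₂ y₂ +
      matS (opK r a) x₁ y₁ * matS (opF r a) x₂ y₂ := by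
  have hq := qv_ne_zero
  have hlt : loI a < hiI a := by rw [Fin.lt_def]; simp [loI, hiI]
  have hne := loI_ne_hiI a
  have hc : ∀ c : Idx r, c ≠ loI a → c ≠ hiI a → ((c < loI a ↔ c < hiI a) ∧ (loI a < c ↔ hiI a < c)) := by
    intro c h1 h2
    rw [Ne, Fin.ext_iff] at h1 h2
    simp only [loI, hiI, Fin.lt_def] at *
    omega
  intro x₁ x₂ y₁ y₂
  simp only [matS_opK, matS_opF, Matrix.diagonal_apply, Matrix.one_apply, alS, kv]
  generalize loI a = lo at *
  generalize hiI a = hi at *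
  have hne' : hi ≠ lo := hne.symm
  have key : ∀ c, c ≠ lo → c ≠ hi → lo ≠ c ∧ hi ≠ c ∧ (c < lo ↔ c < hi) ∧ (lo < c ↔ hi < c) :=
    fun c h1 h2 => ⟨h1.symm, h2.symm, hc c h1 h2⟩
  have hi2 : qv⁻¹ * qv = 1 := inv_mul_cancel₀ hq
  have hgt := hlt.not_gt
  clear hc
  by_cases h1 : y₁ = hi <;> by_cases h2 : y₂ = hi <;> by_cases h3 : x₁ = lo <;>
    by_cases h4 : x₂ = lo <;> by_cases h5 : x₁ = y₂ <;> by_cases h6 : x₂ = y₂ <;>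
    by_cases h7 : x₁ = y₁ <;> by_cases h8 : x₂ = y₁ <;> (try subst_vars) <;> grind

end Commutation

section Commutation

variable {r m : ℕ}

/-- `Ψ(H_{p+1})` commutes with an iterated coproduct
`∑ j, w ⊗ ⋯ ⊗ w ⊗ M ⊗ w' ⊗ ⋯ ⊗ w'` as soon as it does on two tensor factors. -/
lemma sw_comm_coproduct (p : ℕ) (h : p + 1 < m) (w w' : Idx r → Kq) (M : Matrix (Idx r) (Idx r) Kq)
    (hz : Comm2 fun x₁ x₂ y₁ y₂ => M x₁ y₁ * Matrix.diagonal w' x₂ y₂ +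
      Matrix.diagonal w x₁ y₁ * M x₂ y₂) :
    Commute (∑ j : Fin m, tens fun k : Fin m => if (k : ℕ) < j then Matrix.diagonal w
      else if k = j then M else Matrix.diagonal w') (matE r m (Rsw r m p)) := by
  have hne : (⟨p, by omega⟩ : Fin m) ≠ ⟨p+1, h⟩ := by rw [Ne, Fin.mk.injEq]; omega
  rw [← Finset.sum_add_sum_compl {⟨p, by omega⟩, ⟨p+1, h⟩}]
  refine Commute.add_left ?_ (Commute.sum_left _ _ _ fun j hj => ?_)
  · refine sw_comm p h _ _ (fun k => if (k : ℕ) < p then Matrix.diagonal w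
      else Matrix.diagonal w') (fun j hj k h1 h2 => ?_) ?_
    · have hjp : (j : ℕ) = p ∨ (j : ℕ) = p + 1 := by
        simpa [Fin.ext_iff] using hj
      have hkj : k ≠ j := by rw [Ne, Fin.ext_iff]; omega
      rw [if_neg hkj]
      refine if_congr ?_ rfl rfl
      omega
    · simp only [Finset.sum_pair hne]
      simpa [Fin.ext_iff] using hz
  · have hj' : (j : ℕ) ≠ p ∧ (j : ℕ) ≠ p + 1 := by
      simpa [Fin.ext_iff] using hj
    have := sw_comm p h {()} (fun _ : Unit => fun k : Fin m => if (k : ℕ) < j then Matrix.diagonal w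
      else if k = j then M else Matrix.diagonal w') _ (fun _ _ _ _ _ => rfl) ?_
    · simpa using this
    · have e1 : (⟨p, by omega⟩ : Fin m) ≠ j := by rw [Ne, Fin.ext_iff]; exact hj'.1.symm
      have e2 : (⟨p+1, h⟩ : Fin m) ≠ j := by rw [Ne, Fin.ext_iff]; exact hj'.2.symm
      simp only [Finset.sum_singleton, if_neg e1, if_neg e2]
      by_cases hlt : p + 1 < j
      · have : p < j := by omega
        simp only [if_pos hlt, if_pos this]
        exact comm2_diagonal w
      · have : ¬ p < j := by omega
        simp only [if_neg hlt, if_neg this]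
        exact comm2_diagonal w'

lemma sw_comm_diagonal (p : ℕ) (h : p + 1 < m) (w : Idx r → Kq) :
    Commute (tens fun _ : Fin m => Matrix.diagonal w) (matE r m (Rsw r m p)) := by
  have := sw_comm p h {()} (fun _ : Unit => fun _ : Fin m => Matrix.diagonal w) _
    (fun _ _ _ _ _ => rfl) (by simpa using comm2_diagonal w)
  simpa using this

lemma sw_comm_opEE (p : ℕ) (h : p + 1 < m) (a : Fin (2*r+3)) :
    Commute (matE r m (opEE r m a)) (matE r m (Rsw r m p)) := by
  have := sw_comm_coproduct p h (fun _ => 1) (kvi a) (matS (opE r a))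
    (by simpa [matS_opKinv] using comm2_E a)
  rw [matE_opEE]
  have e : ∀ j : Fin m, famE a j = fun k : Fin m => if (k : ℕ) < j then Matrix.diagonal fun _ => 1
      else if k = j then matS (opE r a) else Matrix.diagonal (kvi a) := fun j => by
    funext k
    rw [famE, matS_opKinv, ← Matrix.diagonal_one]
  simpa only [e] using this

lemma sw_comm_opFF (p : ℕ) (h : p + 1 < m) (a : Fin (2*r+3)) :
    Commute (matE r m (opFF r m a)) (matE r m (Rsw r m p)) := by
  have := sw_comm_coproduct p h (kv a) (fun _ => 1) (matS (opF r a))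
    (by simpa [matS_opK] using comm2_F a)
  rw [matE_opFF]
  have e : ∀ j : Fin m, famF a j = fun k : Fin m => if (k : ℕ) < j then Matrix.diagonal (kv a)
      else if k = j then matS (opF r a) else Matrix.diagonal fun _ => 1 := fun j => by
    funext k
    rw [famF, matS_opK, ← Matrix.diagonal_one]
  simpa only [e] using this

lemma sw_comm_opKK (p : ℕ) (h : p + 1 < m) (a : Fin (2*r+3)) :
    Commute (matE r m (opKK r m a)) (matE r m (Rsw r m p)) := by
  rw [matE_opKK]; exact sw_comm_diagonal p h _

lemma sw_comm_opKKinv (p : ℕ) (h : p + 1 < m) (a : Fin (2*r+3)) :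
    Commute (matE r m (opKKinv r m a)) (matE r m (Rsw r m p)) := by
  rw [matE_opKKinv]; exact sw_comm_diagonal p h _

lemma sw_comm_Levi (p : ℕ) {B : Module.End Kq (TP r m)} (hB : B ∈ LeviSet r m) :
    Commute (matE r m B) (matE r m (Rsw r m p)) := by
  by_cases h : p + 1 < m
  swap
  · rw [Rsw, dif_neg h, map_one]; exact Commute.one_right _
  rcases hB with ((hB | ⟨a, -, rfl⟩) | ⟨a, rfl⟩) | ⟨a, rfl⟩
  · rw [Set.mem_singleton_iff.1 hB, opB0, map_add, map_add, map_smul, map_mul]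
    exact ((sw_comm_opEE p h _).add_left
      (((sw_comm_opFF p h _).mul_left (sw_comm_opKKinv p h _)).smul_left _)).add_left
        (sw_comm_opKKinv p h _)
  · rw [opB, map_add, map_mul]
    exact (sw_comm_opEE p h _).add_left ((sw_comm_opFF p h _).mul_left (sw_comm_opKKinv p h _))
  · rw [opkk, map_mul]
    exact (sw_comm_opKK p h _).mul_left (sw_comm_opKKinv p h _)
  · rw [opkkInv, map_mul]
    exact (sw_comm_opKK p h _).mul_left (sw_comm_opKKinv p h _)

end Commutation

section Commutation

variable {r m : ℕ}

lemma kv_rev (a : Fin (2*r+3)) (x : Idx r) : kv a.rev x.rev = kvi a x := by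
  have hne := loI_ne_hiI a
  simp only [kv, kvi, loI_rev, hiI_rev, Fin.rev_inj]
  split_ifs <;> simp_all

lemma kvi_rev (a : Fin (2*r+3)) (x : Idx r) : kvi a.rev x.rev = kv a x := by
  have hne := loI_ne_hiI a
  simp only [kv, kvi, loI_rev, hiI_rev, Fin.rev_inj]
  split_ifs <;> simp_all

/-- `Ψ(H_0)` commutes with a pure tensor whose first factor is diagonal and invariant under
`η_j ↦ η_{-j}`. -/
lemma zero_comm_diagonal (h : 0 < m) (A : Fin m → Matrix (Idx r) (Idx r) Kq) (w : Idx r → Kq)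
    (hA : A ⟨0, h⟩ = Matrix.diagonal w) (hw : ∀ x, w x.rev = w x) :
    Commute (tens A) (matE r m (R0op r m)) := by
  have := zero_comm h {()} (fun _ : Unit => A) _ (fun _ _ _ _ => rfl) fun x y => by
    simp only [Finset.sum_singleton, hA, Matrix.diagonal_apply, hw]
    have e : (x.rev = y) = (x = y.rev) := propext Fin.rev_eq_iff
    simp only [e]
    by_cases hxy : x = y
    · rw [hxy]
    · simp [hxy]
  simpa using this

lemma smul_tens (h : 0 < m) (c : Kq) (A : Fin m → Matrix (Idx r) (Idx r) Kq) :
    c • tens A = tens fun k => if k = ⟨0, h⟩ then c • A k else A k := by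
  ext g f
  rw [Matrix.smul_apply, tens_apply, tens_apply,
    ← Finset.mul_prod_erase _ _ (Finset.mem_univ (⟨0, h⟩ : Fin m)),
    ← Finset.mul_prod_erase _ _ (Finset.mem_univ (⟨0, h⟩ : Fin m)), if_pos rfl, Matrix.smul_apply,
    smul_eq_mul, smul_eq_mul, mul_assoc]
  congr 2
  refine Finset.prod_congr rfl fun k hk => ?_
  rw [if_neg (Finset.ne_of_mem_erase hk)]

/-- The `j`-th summand of `𝔽_{-a} 𝕂_a⁻¹`. -/
def famFK (a : Fin (2*r+3)) (j k : Fin m) : Matrix (Idx r) (Idx r) Kq :=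
  famF a.rev j k * Matrix.diagonal (kvi a)

lemma matE_opFF_opKKinv (a : Fin (2*r+3)) :
    matE r m (opFF r m a.rev * opKKinv r m a) = ∑ j, tens (famFK a j) := by
  rw [map_mul, matE_opFF, matE_opKKinv, Finset.sum_mul]
  refine Finset.sum_congr rfl fun j _ => ?_
  rw [tens_mul]
  rfl

lemma famE_zero (h : 0 < m) (a : Fin (2*r+3)) (k : Fin m) (hk : (k : ℕ) ≠ 0) :
    famE a ⟨0, h⟩ k = Matrix.diagonal (kvi a) := by
  rw [famE, if_neg (by simp), if_neg (by rwa [Fin.ext_iff]), matS_opKinv]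

lemma famFK_zero (h : 0 < m) (a : Fin (2*r+3)) (k : Fin m) (hk : (k : ℕ) ≠ 0) :
    famFK a ⟨0, h⟩ k = Matrix.diagonal (kvi a) := by
  rw [famFK, famF, if_neg (by simp), if_neg (by rwa [Fin.ext_iff]), one_mul]

lemma famE_zero_zero (h : 0 < m) (a : Fin (2*r+3)) (x y : Idx r) :
    famE a ⟨0, h⟩ (⟨0, h⟩ : Fin m) x y = if x = loI a ∧ y = hiI a then 1 else 0 := by
  rw [famE, if_neg (by simp), if_pos rfl, matS_opE]

lemma famFK_zero_zero (h : 0 < m) (a : Fin (2*r+3)) (x y : Idx r) :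
    famFK a ⟨0, h⟩ (⟨0, h⟩ : Fin m) x y =
      if x = (loI a).rev ∧ y = (hiI a).rev then kvi a y else 0 := by
  rw [famFK, famF, if_neg (by simp), if_pos rfl, Matrix.mul_diagonal, matS_opF, loI_rev, hiI_rev]
  simp

lemma zero_comm_famE (h : 0 < m) (a : Fin (2*r+3)) (j : Fin m) (hj : j ≠ ⟨0, h⟩) :
    Commute (tens (famE a j)) (matE r m (R0op r m)) := by
  have hj0 : (0 : ℕ) < j := Nat.pos_of_ne_zero fun e => hj (Fin.ext e)
  refine zero_comm_diagonal h _ (fun _ => 1) ?_ fun _ => rfl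
  rw [famE, if_pos (by exact hj0), Matrix.diagonal_one]

lemma zero_comm_famFK (h : 0 < m) (a : Fin (2*r+3)) (j : Fin m) (hj : j ≠ ⟨0, h⟩) :
    Commute (tens (famFK a j)) (matE r m (R0op r m)) := by
  have hj0 : (0 : ℕ) < j := Nat.pos_of_ne_zero fun e => hj (Fin.ext e)
  refine zero_comm_diagonal h _ (fun x => kv a.rev x * kvi a x) ?_ fun x => ?_
  · rw [famFK, famF, if_pos (by exact hj0), matS_opK, Matrix.diagonal_mul_diagonal]
  · rw [kv_rev, ← kv_rev a x.rev, Fin.rev_rev, mul_comm]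

lemma zero_comm_opB (h : 0 < m) (a : Fin (2*r+3)) (ha : a ≠ midI r) :
    Commute (matE r m (opB r m a)) (matE r m (R0op r m)) := by
  rw [opB, map_add, matE_opFF_opKKinv, matE_opEE, ← Finset.sum_add_distrib,
    ← Finset.add_sum_erase _ _ (Finset.mem_univ (⟨0, h⟩ : Fin m))]
  refine Commute.add_left ?_ (Commute.sum_left _ _ _ fun j hj =>
    (zero_comm_famE h a j (Finset.ne_of_mem_erase hj)).add_left
      (zero_comm_famFK h a j (Finset.ne_of_mem_erase hj)))
  have := zero_comm h Finset.univ
    (fun b : Bool => if b then famE a ⟨0, h⟩ else famFK a ⟨0, h⟩)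
    (fun _ => Matrix.diagonal (kvi a)) (fun b _ k hk => ?_) fun x y => ?_
  · simpa using this
  · cases b
    · exact famFK_zero h a k hk
    · exact famE_zero h a k hk
  · simp only [Fintype.sum_bool, if_true, Bool.false_eq_true, if_false, famE_zero_zero,
      famFK_zero_zero]
    have hval : (a : ℕ) ≠ r + 1 := fun e => ha (Fin.ext e)
    have h1 : (hiI a).rev ≠ loI a := by
      rw [Ne, Fin.ext_iff, Fin.val_rev]; simp only [loI, hiI]; omega
    have h2 : (hiI a).rev ≠ hiI a := rev_ne_self _
    have h3 : (loI a < (loI a).rev) ↔ (hiI a < (hiI a).rev) := by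
      rw [Fin.lt_def, Fin.lt_def, Fin.val_rev, Fin.val_rev]; simp only [loI, hiI]; omega
    have h4 : ∀ u v : Idx r, u.rev = v ↔ u = v.rev := fun u v => Fin.rev_eq_iff
    have h5 : ((loI a).rev < loI a) ↔ ((hiI a).rev < hiI a) := by
      rw [Fin.lt_def, Fin.lt_def, Fin.val_rev, Fin.val_rev]; simp only [loI, hiI]; omega
    have hk : kvi a (hiI a).rev = 1 := by rw [kvi, if_neg h1, if_neg h2]
    simp only [h4, Fin.rev_rev, al0]
    generalize loI a = lo at *
    generalize hiI a = hi at *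
    by_cases e1 : x = lo <;> by_cases e2 : y = hi <;> by_cases e3 : x = lo.rev <;>
      by_cases e4 : y = hi.rev <;> (try subst_vars) <;> grind [Fin.rev_rev]

lemma zero_comm_opB0 (h : 0 < m) : Commute (matE r m (opB0 r m)) (matE r m (R0op r m)) := by
  have hF := matE_opFF_opKKinv (m := m) (midI r)
  rw [midI_rev] at hF
  rw [opB0, map_add, map_add, map_smul, hF, matE_opEE, Finset.smul_sum, ← Finset.sum_add_distrib,
    ← Finset.add_sum_erase _ _ (Finset.mem_univ (⟨0, h⟩ : Fin m)), add_right_comm]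
  refine Commute.add_left ?_ (Commute.sum_left _ _ _ fun j hj =>
    (zero_comm_famE h _ j (Finset.ne_of_mem_erase hj)).add_left
      ((zero_comm_famFK h _ j (Finset.ne_of_mem_erase hj)).smul_left _))
  rw [smul_tens h, matE_opKKinv]
  have := zero_comm h Finset.univ
    (![famE (midI r) ⟨0, h⟩,
      fun k => if k = ⟨0, h⟩ then qv • famFK (midI r) ⟨0, h⟩ k else famFK (midI r) ⟨0, h⟩ k,
      fun _ => Matrix.diagonal (kvi (midI r))])
    (fun _ => Matrix.diagonal (kvi (midI r))) (fun b _ k hk => ?_) fun x y => ?_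
  · simpa [Fin.sum_univ_three] using this
  · fin_cases b
    · exact famE_zero h _ k hk
    · have hk0 : k ≠ ⟨0, h⟩ := by rwa [Ne, Fin.ext_iff]
      simpa [hk0] using famFK_zero h _ k hk
    · rfl
  · have h0 : (hiI (midI r)).rev = loI (midI r) := by rw [← loI_rev, midI_rev]
    have h1 : (loI (midI r)).rev = hiI (midI r) := by rw [← hiI_rev, midI_rev]
    simp only [Fin.sum_univ_three, Matrix.cons_val_zero, Matrix.cons_val_one, Matrix.cons_val,
      if_true, Matrix.smul_apply, famE_zero_zero,
      famFK_zero_zero, Matrix.diagonal_apply, smul_eq_mul, al0, kvi]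
    have hlt : loI (midI r) < hiI (midI r) := by rw [Fin.lt_def]; simp [loI, hiI]
    have h4 : ∀ u v : Idx r, u.rev = v ↔ u = v.rev := fun u v => Fin.rev_eq_iff
    have hq := qv_ne_zero
    have hq1 : qv * qv⁻¹ = 1 := mul_inv_cancel₀ hq
    generalize loI (midI r) = lo at *
    generalize hiI (midI r) = hi at *
    have hne : lo ≠ hi := hlt.ne
    have hne' : hi ≠ lo := hlt.ne'
    have hgt := hlt.not_gt
    simp only [h4, h0, h1]
    by_cases e1 : x = lo <;> by_cases e2 : y = hi <;> by_cases e3 : x = hi <;>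
      by_cases e4 : y = lo <;> by_cases e5 : x = y <;> by_cases e6 : x = y.rev <;> (try subst_vars) <;>
      grind [Fin.rev_rev]

lemma zero_comm_Levi {B : Module.End Kq (TP r m)} (hB : B ∈ LeviSet r m) :
    Commute (matE r m B) (matE r m (R0op r m)) := by
  by_cases h : 0 < m
  swap
  · rw [R0op, dif_neg h, map_one]; exact Commute.one_right _
  rcases hB with ((hB | ⟨a, ha, rfl⟩) | ⟨a, rfl⟩) | ⟨a, rfl⟩
  · rw [Set.mem_singleton_iff.1 hB]; exact zero_comm_opB0 h
  · exact zero_comm_opB h a ha.1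
  · rw [opkk, map_mul, matE_opKK, matE_opKKinv, tens_mul]
    refine zero_comm_diagonal h _ _ (Matrix.diagonal_mul_diagonal _ _) fun x => ?_
    rw [kvi_rev, ← kvi_rev a x.rev, Fin.rev_rev, mul_comm]
  · rw [opkkInv, map_mul, matE_opKK, matE_opKKinv, tens_mul]
    refine zero_comm_diagonal h _ _ (Matrix.diagonal_mul_diagonal _ _) fun x => ?_
    rw [kv_rev, ← kv_rev a x.rev, Fin.rev_rev, mul_comm]

lemma RopN_comm_Levi (i : ℕ) {B : Module.End Kq (TP r m)} (hB : B ∈ LeviSet r m) :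
    B * RopN r m i = RopN r m i * B := by
  apply (matE r m).injective
  rw [map_mul, map_mul, RopN]
  split_ifs
  · exact zero_comm_Levi hB
  · exact sw_comm_Levi _ hB

end Commutation

/-! ### The projections onto `V^{⊗l} ⊗ η_{r+3/2}^{⊗(m-l)}` -/

section Projections

variable {r m : ℕ}

open Classical in
/-- The matrix of the projection of `V̄^⊗m` onto `V^{⊗l} ⊗ η_{r+3/2}^{⊗(m-l)}` killing the other
basis vectors; this is the image under `Ξ` of the unit of the algebra spanned by the `x_σ^(l)`. -/
def PM (r m l : ℕ) : Matrix (Fin m → Idx r) (Fin m → Idx r) Kq :=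
  Matrix.diagonal fun g => if goodF r m l g then 1 else 0

/-- The matrix `Y` preserves the decomposition of `V̄^⊗m` coming from
`V̄ = K η_{-r-3/2} ⊕ V ⊕ K η_{r+3/2}`. -/
def BlockPres (Y : Matrix (Fin m → Idx r) (Fin m → Idx r) Kq) : Prop :=
  ∀ g f, Y g f ≠ 0 → ∀ k, SameBlock (g k) (f k)

namespace BlockPres

variable {Y Z : Matrix (Fin m → Idx r) (Fin m → Idx r) Kq}

lemma add (hY : BlockPres Y) (hZ : BlockPres Z) : BlockPres (Y + Z) := fun g f h => by
  by_cases h1 : Y g f = 0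
  · exact hZ g f fun h2 => h (by rw [Matrix.add_apply, h1, h2, add_zero])
  · exact hY g f h1

lemma smul (c : Kq) (hY : BlockPres Y) : BlockPres (c • Y) := fun g f h =>
  hY g f fun h1 => h (by rw [Matrix.smul_apply, h1, smul_zero])

lemma mul (hY : BlockPres Y) (hZ : BlockPres Z) : BlockPres (Y * Z) := fun g f h k => by
  rw [Matrix.mul_apply] at h
  obtain ⟨e, -, he⟩ := Finset.exists_ne_zero_of_sum_ne_zero h
  exact (hY g e (left_ne_zero_of_mul he) k).trans (hZ e f (right_ne_zero_of_mul he) k)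

lemma sum {ι : Type*} (J : Finset ι) (F : ι → Matrix (Fin m → Idx r) (Fin m → Idx r) Kq)
    (hF : ∀ j ∈ J, BlockPres (F j)) : BlockPres (∑ j ∈ J, F j) := fun g f h => by
  rw [Matrix.sum_apply] at h
  obtain ⟨j, hj, he⟩ := Finset.exists_ne_zero_of_sum_ne_zero h
  exact hF j hj g f he

lemma tens {A : Fin m → Matrix (Idx r) (Idx r) Kq}
    (hA : ∀ k x y, A k x y ≠ 0 → SameBlock x y) : BlockPres (tens A) := fun g f h k => by
  rw [tens_apply] at h
  exact hA k _ _ (Finset.prod_ne_zero_iff.1 h k (Finset.mem_univ k))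

end BlockPres

lemma sameBlock_of_diagonal {w : Idx r → Kq} {x y : Idx r} (h : Matrix.diagonal w x y ≠ 0) :
    SameBlock x y := by
  by_contra hxy
  exact h (Matrix.diagonal_apply_ne _ fun e => hxy (Or.inl e))

lemma blockPres_opKK (a : Fin (2*r+3)) : BlockPres (matE r m (opKK r m a)) := by
  rw [matE_opKK]; exact BlockPres.tens fun _ _ _ h => sameBlock_of_diagonal h

lemma blockPres_opKKinv (a : Fin (2*r+3)) : BlockPres (matE r m (opKKinv r m a)) := by
  rw [matE_opKKinv]; exact BlockPres.tens fun _ _ _ h => sameBlock_of_diagonal h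

lemma sameBlock_loI_hiI {a : Fin (2*r+3)} (h0 : 0 < (a : ℕ)) (h1 : (a : ℕ) < 2*r+2) :
    SameBlock (loI a) (hiI a) := by
  refine Or.inr ⟨(innerI_iff _).2 ?_, (innerI_iff _).2 ?_⟩ <;> simp only [loI, hiI] <;> omega

lemma blockPres_opEE {a : Fin (2*r+3)} (h0 : 0 < (a : ℕ)) (h1 : (a : ℕ) < 2*r+2) :
    BlockPres (matE r m (opEE r m a)) := by
  rw [matE_opEE]
  refine BlockPres.sum _ _ fun j _ => BlockPres.tens fun k x y h => ?_
  rw [famE] at h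
  split_ifs at h
  · exact sameBlock_of_diagonal (w := 1) h
  · rw [matS_opE] at h
    split_ifs at h with hxy
    · rw [hxy.1, hxy.2]; exact sameBlock_loI_hiI h0 h1
    · exact absurd rfl h
  · rw [matS_opKinv] at h; exact sameBlock_of_diagonal h

lemma blockPres_opFF {a : Fin (2*r+3)} (h0 : 0 < (a : ℕ)) (h1 : (a : ℕ) < 2*r+2) :
    BlockPres (matE r m (opFF r m a)) := by
  rw [matE_opFF]
  refine BlockPres.sum _ _ fun j _ => BlockPres.tens fun k x y h => ?_
  rw [famF] at h
  split_ifs at h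
  · rw [matS_opK] at h; exact sameBlock_of_diagonal h
  · rw [matS_opF] at h
    split_ifs at h with hxy
    · rw [hxy.1, hxy.2]; exact (sameBlock_loI_hiI h0 h1).symm
    · exact absurd rfl h
  · exact sameBlock_of_diagonal (w := 1) h

/-- The generators of the Levi subalgebra avoid `ℬ_{±(r+1)}`, the only ones which would mix `V` and
`η_{±(r+3/2)}`. -/
lemma blockPres_Levi {B : Module.End Kq (TP r m)} (hB : B ∈ LeviSet r m) :
    BlockPres (matE r m B) := by
  rcases hB with ((hB | ⟨a, ⟨-, h0, h1⟩, rfl⟩) | ⟨a, rfl⟩) | ⟨a, rfl⟩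
  · have h0 : 0 < (midI r : ℕ) := by simp [midI]
    have h1 : (midI r : ℕ) < 2*r+2 := by simp only [midI]; omega
    rw [Set.mem_singleton_iff.1 hB, opB0, map_add, map_add, map_smul, map_mul]
    exact ((blockPres_opEE h0 h1).add
      (((blockPres_opFF h0 h1).mul (blockPres_opKKinv _)).smul _)).add (blockPres_opKKinv _)
  · rw [opB, map_add, map_mul]
    have h2 : 0 < (a.rev : ℕ) := by rw [Fin.val_rev]; omega
    have h3 : (a.rev : ℕ) < 2*r+2 := by rw [Fin.val_rev]; omega
    exact (blockPres_opEE h0 h1).add ((blockPres_opFF h2 h3).mul (blockPres_opKKinv _))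
  · rw [opkk, map_mul]
    exact (blockPres_opKK _).mul (blockPres_opKKinv _)
  · rw [opkkInv, map_mul]
    exact (blockPres_opKK _).mul (blockPres_opKKinv _)

lemma goodF_of_sameBlock {l : ℕ} {g f : Fin m → Idx r} (h : ∀ k, SameBlock (g k) (f k))
    (hg : goodF r m l g) : goodF r m l f := fun k => by
  have htop : ¬ innerI r (topI r) := fun e => e.2 rfl
  rcases h k with e | ⟨h1, h2⟩
  · rw [← e]; exact hg k
  · refine ⟨fun _ => h2, fun hl => ?_⟩
    rw [(hg k).2 hl] at h1
    exact absurd h1 htop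

lemma BlockPres.commute_PM {Y : Matrix (Fin m → Idx r) (Fin m → Idx r) Kq} (hY : BlockPres Y)
    (l : ℕ) : Commute Y (PM r m l) := by
  ext g f
  rw [PM, Matrix.mul_diagonal, Matrix.diagonal_mul]
  by_cases h : Y g f = 0
  · rw [h, zero_mul, mul_zero]
  · have e : goodF r m l g ↔ goodF r m l f :=
      ⟨goodF_of_sameBlock (hY g f h), goodF_of_sameBlock fun k => (hY g f h k).symm⟩
    by_cases hg : goodF r m l g
    · rw [if_pos hg, if_pos (e.1 hg), mul_comm]
    · rw [if_neg hg, if_neg fun hf => hg (e.2 hf), mul_comm]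

end Projections

/-! ### Operators commuting with the Hecke generators and the projections at `q = 1` -/

section HSpec

variable {r m : ℕ}

/-- The matrices of the operators `Ψ(H_i)` and of the projections `p_l`. -/
def genS (r m : ℕ) : Set (Matrix (Fin m → Idx r) (Fin m → Idx r) Kq) :=
  {s | (∃ i < m, s = matE r m (RopN r m i)) ∨ ∃ l ≤ m, s = PM r m l}

lemma hasVal_alS (x y : Idx r) : HasVal (alS x y) 0 := by
  rw [alS]
  split_ifs
  · simpa using HasVal.qinv.sub HasVal.one
  · simpa using HasVal.qinv.sub HasVal.q
  · exact HasVal.zero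

lemma hasVal_al0 (x : Idx r) : HasVal (al0 x) 0 := by
  rw [al0]
  split_ifs
  · simpa using HasVal.qinv.sub HasVal.q
  · exact HasVal.zero

/-- At `q = 1` the operators `Ψ(H_i)` become permutation matrices. -/
lemma mval_reflM {X : Type*} [DecidableEq X] (τ : X → X) (α : X → Kq) (hα : ∀ x, HasVal (α x) 0) :
    MVal (reflM τ α) (Matrix.of fun g f => if τ g = f then 1 else 0) := fun g f => by
  have h : HasVal (if g = f then α g else 0) 0 := by
    split_ifs
    exacts [hα g, HasVal.zero]
  have h2 : HasVal (if τ g = f then (1 : Kq) else 0) (if τ g = f then 1 else 0) :=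
    HasVal.one.ite HasVal.zero
  simpa [reflM] using h2.add h

/-- A rational matrix which commutes with the permutation matrix of an involution is invariant under
that involution. -/
lemma invariant_of_comm {X : Type*} [Fintype X] [DecidableEq X] (τ : X → X)
    (hτ : ∀ x, τ (τ x) = x) (C : Matrix X X ℚ)
    (h : C * (Matrix.of fun g f => if τ g = f then 1 else 0) =
      (Matrix.of fun g f => if τ g = f then 1 else 0) * C) (g f : X) : C (τ g) (τ f) = C g f := by
  have e : ∀ x, (τ x = f) = (x = τ f) := fun x => propext
    ⟨fun e => by rw [← e, hτ], fun e => by rw [e, hτ]⟩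
  have := congrFun (congrFun h (τ g)) f
  simpa [Matrix.mul_apply, e, hτ] using this

variable {C : Matrix (Fin m → Idx r) (Fin m → Idx r) ℚ}

lemma swap_invariant (hC : ∀ s ∈ genS r m, ∀ c, MVal s c → C * c = c * C) (p : ℕ) (h : p + 1 < m)
    (g f : Fin m → Idx r) :
    C (g ∘ Equiv.swap ⟨p, by omega⟩ ⟨p+1, h⟩) (f ∘ Equiv.swap ⟨p, by omega⟩ ⟨p+1, h⟩) = C g f := by
  refine invariant_of_comm (fun g : Fin m → Idx r => g ∘ Equiv.swap (⟨p, by omega⟩ : Fin m) ⟨p+1, h⟩)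
    (fun x => by funext k; simp) C (hC _ (Or.inl ⟨p + 1, h, rfl⟩) _ ?_) g f
  rw [RopN, if_neg (Nat.succ_ne_zero p), Nat.add_sub_cancel, matE_Rsw p h]
  exact mval_reflM _ _ fun x => hasVal_alS _ _

lemma flip_zero_invariant (hC : ∀ s ∈ genS r m, ∀ c, MVal s c → C * c = c * C) (h : 0 < m)
    (g f : Fin m → Idx r) :
    C (Function.update g ⟨0, h⟩ (g ⟨0, h⟩).rev) (Function.update f ⟨0, h⟩ (f ⟨0, h⟩).rev) =
      C g f := by
  refine invariant_of_comm (fun g : Fin m → Idx r => Function.update g ⟨0, h⟩ (g ⟨0, h⟩).rev)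
    (fun x => by simp) C (hC _ (Or.inl ⟨0, h, rfl⟩) _ ?_) g f
  rw [RopN, if_pos rfl, matE_R0 h]
  exact mval_reflM _ _ fun x => hasVal_al0 _

/-- Adjacent transpositions generate the symmetric group, hence the invariance of `C` under all
permutations of the tensor factors. -/
lemma perm_invariant (hC : ∀ s ∈ genS r m, ∀ c, MVal s c → C * c = c * C) (σ : Equiv.Perm (Fin m)) :
    ∀ g f : Fin m → Idx r, C (g ∘ σ) (f ∘ σ) = C g f := by
  obtain _ | n := m
  · intro g f
    congr 1 <;> exact Subsingleton.elim _ _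
  have hσ : σ ∈ Submonoid.closure
      (Set.range fun i : Fin n => Equiv.swap i.castSucc i.succ) := by
    rw [Equiv.Perm.mclosure_swap_castSucc_succ]; trivial
  induction hσ using Submonoid.closure_induction with
  | mem s hs =>
    obtain ⟨i, rfl⟩ := hs
    exact swap_invariant hC i (by omega)
  | one => intro g f; rfl
  | mul s t _ _ h1 h2 =>
    intro g f
    rw [Equiv.Perm.coe_mul, ← Function.comp_assoc, ← Function.comp_assoc, h2, h1]

lemma flip_singleton (k : Fin m) (g : Fin m → Idx r) :
    flipAt {k} g = Function.update g k (g k).rev := by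
  funext j
  simp only [flipAt, Finset.mem_singleton, Function.update_apply]
  split_ifs with h
  · rw [h]
  · rfl

lemma flip_invariant (hC : ∀ s ∈ genS r m, ∀ c, MVal s c → C * c = c * C) (T : Finset (Fin m))
    (g f : Fin m → Idx r) : C (flipAt T g) (flipAt T f) = C g f := by
  have h1 : ∀ k : Fin m, ∀ g f : Fin m → Idx r, C (flipAt {k} g) (flipAt {k} f) = C g f := by
    intro k g f
    have h0 : 0 < m := k.pos
    have e : ∀ g : Fin m → Idx r, flipAt {k} g ∘ Equiv.swap ⟨0, h0⟩ k =
        Function.update (g ∘ Equiv.swap ⟨0, h0⟩ k) ⟨0, h0⟩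
          ((g ∘ Equiv.swap ⟨0, h0⟩ k) ⟨0, h0⟩).rev := by
      intro g
      funext j
      simp only [flipAt, Finset.mem_singleton, Function.update_apply, Function.comp_apply,
        Equiv.swap_apply_left]
      have : (Equiv.swap (⟨0, h0⟩ : Fin m) k j = k) = (j = ⟨0, h0⟩) := by
        rw [Equiv.swap_apply_eq_iff, Equiv.swap_apply_right]
      simp only [this]
      split_ifs with hj
      · rw [hj, Equiv.swap_apply_left]
      · rfl
    rw [← perm_invariant hC (Equiv.swap ⟨0, h0⟩ k), e, e, flip_zero_invariant hC, perm_invariant hC]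
  induction T using Finset.induction_on generalizing g f with
  | empty => congr 1
  | insert k T hk ih =>
    have e : ∀ g : Fin m → Idx r, flipAt (insert k T) g = flipAt {k} (flipAt T g) := by
      intro g
      funext j
      simp only [flipAt, Finset.mem_insert, Finset.mem_singleton]
      by_cases hj : j = k
      · subst hj; simp [hk]
      · simp [hj]
    rw [e, e, h1, ih]

/-- Every pair of multi-indices can be moved by a signed permutation so that the second one is
`good`; commutation with the projections then compares the two. -/
lemma block_invariant (hC : ∀ s ∈ genS r m, ∀ c, MVal s c → C * c = c * C)
    (g f : Fin m → Idx r) (hgf : C g f ≠ 0) (k : Fin m) : SameBlock (g k) (f k) := by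
  classical
  have hgood : ∀ l ≤ m, ∀ g f : Fin m → Idx r, C g f ≠ 0 → goodF r m l f → goodF r m l g := by
    intro l hl g f h hf
    have hv : MVal (PM r m l) (Matrix.diagonal fun g => if goodF r m l g then 1 else 0) :=
      MVal.diagonal fun g => HasVal.one.ite HasVal.zero
    have h1 := congrFun (congrFun (hC _ (Or.inr ⟨l, hl, rfl⟩) _ hv) g) f
    rw [Matrix.mul_diagonal, Matrix.diagonal_mul, if_pos hf, mul_one] at h1
    by_contra hg
    rw [if_neg hg, zero_mul] at h1
    exact h h1
  have hbt : (botI r).rev = topI r := by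
    rw [Fin.ext_iff, Fin.val_rev]; simp only [botI, topI]; omega
  have htb : topI r ≠ botI r := by
    rw [Ne, Fin.ext_iff]; simp [botI, topI]
  -- The entries `η_{-r-3/2}` are flipped to `η_{r+3/2}`, which are then sorted to the end.
  set T : Finset (Fin m) := Finset.univ.filter fun k => f k = botI r with hT
  set f1 := flipAt T f with hf1
  set g1 := flipAt T g with hg1
  have hf1b : ∀ k, f1 k ≠ botI r := by
    intro k
    simp only [hf1, hT, flipAt, Finset.mem_filter, Finset.mem_univ, true_and]
    split_ifs with h
    · rw [h, hbt]; exact htb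
    · exact h
  let key : Fin m → ℕ := fun k => if f1 k = topI r then 1 else 0
  have hmono : Monotone (key ∘ Tuple.sort key) := Tuple.monotone_sort key
  set σ := Tuple.sort key
  have hex : ∃ l : ℕ, ∀ k : Fin m, l ≤ k → key (σ k) ≠ 0 := ⟨m, fun k hk => by omega⟩
  set l := Nat.find hex with hl
  have hlm : l ≤ m := Nat.find_min' hex fun k hk => by omega
  have hf2 : goodF r m l (f1 ∘ σ) := by
    intro k
    refine ⟨fun hk => ⟨hf1b _, fun htop => ?_⟩, fun hk => ?_⟩
    · have h2 := Nat.find_min hex hk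
      push Not at h2
      obtain ⟨j, hkj, hj⟩ := h2
      have h3 : key (σ k) ≤ key (σ j) := hmono hkj
      have h4 : key (σ k) = 1 := if_pos htop
      omega
    · have h2 := Nat.find_spec hex k hk
      by_contra h3
      exact h2 (if_neg h3)
  have hne : C (g1 ∘ σ) (f1 ∘ σ) ≠ 0 := by
    rwa [perm_invariant hC, flip_invariant hC]
  have hg2 := hgood l hlm _ _ hne hf2
  have hsame : ∀ j, SameBlock (g1 j) (f1 j) := by
    intro j
    have h1 := hg2 (σ.symm j)
    have h2 := hf2 (σ.symm j)
    simp only [Function.comp_apply, Equiv.apply_symm_apply] at h1 h2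
    by_cases hk : ((σ.symm j : Fin m) : ℕ) < l
    · exact Or.inr ⟨h1.1 hk, h2.1 hk⟩
    · exact Or.inl ((h1.2 (not_lt.1 hk)).trans (h2.2 (not_lt.1 hk)).symm)
  have h := hsame k
  simp only [hg1, hf1, flipAt] at h
  split_ifs at h
  · exact sameBlock_rev.1 h
  · exact h

end HSpec

/-! ### The image of the duplex Hecke algebra -/

section Final

variable {r m : ℕ}

lemma reflM_transpose {X : Type*} [DecidableEq X] (τ : X → X) (hτ : ∀ x, τ (τ x) = x)
    (α : X → Kq) : (reflM τ α).transpose = reflM τ α := by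
  ext g f
  rw [Matrix.transpose_apply, reflM, Matrix.of_apply, Matrix.of_apply]
  have h : (τ f = g) = (τ g = f) := propext
    ⟨fun e => by rw [← e, hτ], fun e => by rw [← e, hτ]⟩
  simp only [h]
  by_cases hgf : g = f
  · rw [hgf]
  · rw [if_neg hgf, if_neg (Ne.symm hgf)]

lemma genS_transpose {s : Matrix (Fin m → Idx r) (Fin m → Idx r) Kq} (hs : s ∈ genS r m) :
    s.transpose = s := by
  rcases hs with ⟨i, hi, rfl⟩ | ⟨l, hl, rfl⟩
  · rw [RopN]
    split_ifs with h0
    · rw [matE_R0 (by omega)]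
      exact reflM_transpose _ (fun x => by simp) _
    · rw [matE_Rsw _ (by omega)]
      exact reflM_transpose _ (fun x => by funext k; simp) _
  · exact Matrix.diagonal_transpose _

/-- The Hecke generators and the projections generate an algebra stable under transposition, which
makes the double commutant theorem available for it. -/
lemma adjoin_genS_transpose (s : Matrix (Fin m → Idx r) (Fin m → Idx r) Kq)
    (hs : s ∈ Algebra.adjoin Kq (genS r m)) : s.transpose ∈ Algebra.adjoin Kq (genS r m) := by
  induction hs using Algebra.adjoin_induction with
  | mem x hx => rw [genS_transpose hx]; exact Algebra.subset_adjoin hx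
  | algebraMap c =>
    rw [Matrix.algebraMap_eq_diagonal, Matrix.diagonal_transpose, ← Matrix.algebraMap_eq_diagonal]
    exact Subalgebra.algebraMap_mem _ _
  | add x y _ _ hx hy => rw [Matrix.transpose_add]; exact add_mem hx hy
  | mul x y _ _ hx hy => rw [Matrix.transpose_mul]; exact mul_mem hy hx

lemma genS_comm_PhiL {s : Matrix (Fin m → Idx r) (Fin m → Idx r) Kq} (hs : s ∈ genS r m)
    {B : Module.End Kq (TP r m)} (hB : B ∈ PhiL r m) : Commute (matE r m B) s := by
  induction hB using Algebra.adjoin_induction with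
  | mem B hB =>
    rcases hs with ⟨i, hi, rfl⟩ | ⟨l, hl, rfl⟩
    · have := congrArg (matE r m) (RopN_comm_Levi i hB)
      rwa [map_mul, map_mul] at this
    · exact (blockPres_Levi hB).commute_PM l
  | algebraMap c => rw [AlgEquiv.commutes]; exact Algebra.commutes c s
  | add x y _ _ hx hy => rw [map_add]; exact hx.add_left hy
  | mul x y _ _ hx hy => rw [map_mul]; exact hx.mul_left hy

/-- The commutant of the Hecke generators and the projections is `Φ(L_q^ı)`, by specialization to
`q = 1`. -/
lemma commutant_genS (Z : Matrix (Fin m → Idx r) (Fin m → Idx r) Kq)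
    (hZ : ∀ s ∈ genS r m, Z * s = s * Z) : ∃ B ∈ PhiL r m, matE r m B = Z := by
  have := commutant_le_of_specialization
    ((Subalgebra.toSubmodule (PhiL r m)).map (matE r m).toLinearMap) (genS r m) ?_ ?_ Z hZ
  · exact this
  · rintro _ ⟨B, hB, rfl⟩ s hs
    exact genS_comm_PhiL hs hB
  · intro C hC
    obtain ⟨Y, hY, hYC⟩ := mem_valPhi C (perm_invariant hC) (flip_invariant hC)
      (block_invariant hC)
    exact ⟨_, ⟨Y, hY, rfl⟩, hYC⟩

lemma opPerm_one (l : ℕ) : opPerm r m (1 : Equiv.Perm (Fin l)) = 1 := by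
  have h : lenPerm (1 : Equiv.Perm (Fin l)) = 0 := by
    rw [lenPerm, Finset.card_eq_zero, Finset.filter_eq_empty_iff]
    rintro p - ⟨h1, h2⟩
    exact absurd h1 h2.not_gt
  rw [opPerm, permWord, h, permWordAux]
  rfl

lemma opPerm_comm_Levi {l : ℕ} (σ : Equiv.Perm (Fin l)) {B : Module.End Kq (TP r m)}
    (hB : B ∈ LeviSet r m) : Commute B (opPerm r m σ) := by
  refine Commute.list_prod_right _ _ fun x hx => ?_
  rw [List.mem_reverse, List.mem_map] at hx
  obtain ⟨p, -, rfl⟩ := hx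
  exact RopN_comm_Levi _ hB

lemma matE_Xg (Xi : DuplexH m →ₐ[Kq] (Module.End Kq (TP r m))ᵐᵒᵖ)
    (hXix : ∀ (l : Fin (m+1)) (σ : Equiv.Perm (Fin (l : ℕ))),
      ∀ v ∈ Vsub r m (l : ℕ), (Xi (Xg m l σ)).unop v = opPerm r m σ v)
    (hXix0 : ∀ (l : Fin (m+1)) (σ : Equiv.Perm (Fin (l : ℕ))) (f : Fin m → Idx r),
      ¬ goodF r m (l : ℕ) f → (Xi (Xg m l σ)).unop (Mf f) = 0)
    (l : Fin (m+1)) (σ : Equiv.Perm (Fin (l : ℕ))) :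
    matE r m (Xi (Xg m l σ)).unop = matE r m (opPerm r m σ) * PM r m l := by
  ext g f
  rw [PM, Matrix.mul_diagonal, matE_apply, matE_apply]
  split_ifs with h
  · rw [hXix l σ _ (Submodule.subset_span ⟨f, h, rfl⟩), mul_one]
  · rw [hXix0 l σ f h, mul_zero]
    rfl

end Final
/-- **Theorem 3.7 (Levi-type ıSchur duality, second half).**
An operator `A ∈ End_K(V̄^⊗m)` commutes with every element of `Φ(L_q^ı)` if and only if
`A` lies in the image `Ξ(𝓗_m)` of the duplex Hecke algebra; that is,
`Ξ(𝓗_m) = End_{Φ(L_q^ı)}(V̄^⊗m)`. -/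
theorem duplex_duality_second_half (r m : ℕ) (hr : 1 ≤ r) (hm : 2 ≤ m)
    (Xi : DuplexH m →ₐ[Kq] (Module.End Kq (TP r m))ᵐᵒᵖ)
    (hXiT : ∀ i : Fin m, (Xi (Tg m i)).unop = RopN r m (i : ℕ))
    (hXix : ∀ (l : Fin (m+1)) (σ : Equiv.Perm (Fin (l : ℕ))),
      ∀ v ∈ Vsub r m (l : ℕ), (Xi (Xg m l σ)).unop v = opPerm r m σ v)
    (hXix0 : ∀ (l : Fin (m+1)) (σ : Equiv.Perm (Fin (l : ℕ))) (f : Fin m → Idx r),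
      ¬ goodF r m (l : ℕ) f → (Xi (Xg m l σ)).unop (Mf f) = 0) :
    ∀ A : Module.End Kq (TP r m),
      (∀ B ∈ PhiL r m, A * B = B * A) ↔ ∃ h : DuplexH m, A = (Xi h).unop := by
  have hmat : ∀ (l : Fin (m+1)) (σ : Equiv.Perm (Fin (l : ℕ))),
      matE r m (Xi (Xg m l σ)).unop = matE r m (opPerm r m σ) * PM r m l :=
    matE_Xg Xi hXix hXix0
  intro A
  constructor
  · intro hA
    have hbi : matE r m A ∈ Algebra.adjoin Kq (genS r m) := by
      refine mem_of_mem_bicommutant _ adjoin_genS_transpose _ fun Z hZ => ?_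
      obtain ⟨B, hB, rfl⟩ := commutant_genS Z fun s hs => hZ s (Algebra.subset_adjoin hs)
      rw [← map_mul, hA B hB, map_mul]
    have hle : Algebra.adjoin Kq (genS r m) ≤
        (Subalgebra.unop Xi.range).map (matE r m : _ →ₐ[Kq] _) := by
      refine Algebra.adjoin_le ?_
      rintro s (⟨i, hi, rfl⟩ | ⟨l, hl, rfl⟩)
      · exact ⟨RopN r m i, ⟨Tg m ⟨i, hi⟩, MulOpposite.unop_injective (hXiT ⟨i, hi⟩)⟩, rfl⟩
      · refine ⟨(Xi (Xg m ⟨l, by omega⟩ 1)).unop, ⟨Xg m ⟨l, by omega⟩ 1, rfl⟩, ?_⟩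
        have h := hmat ⟨l, by omega⟩ 1
        rwa [opPerm_one, map_one, one_mul] at h
    obtain ⟨B, ⟨h, hh⟩, hB⟩ := hle hbi
    refine ⟨h, ?_⟩
    have hBA : B = A := (matE r m).injective hB
    rw [← hBA]
    exact (congrArg MulOpposite.unop hh).symm
  · rintro ⟨h, rfl⟩ B hB
    suffices hL : ∀ B ∈ LeviSet r m, Commute B (Xi h).unop by
      have hcen : PhiL r m ≤ Subalgebra.centralizer Kq {(Xi h).unop} :=
        Algebra.adjoin_le fun B hB x hx => by
          rw [Set.mem_singleton_iff.1 hx]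
          exact (hL B hB).symm
      exact hcen hB _ rfl
    intro B hB
    obtain ⟨y, rfl⟩ := RingQuot.mkAlgHom_surjective Kq (DHrel m) h
    induction y using FreeAlgebra.induction with
    | grade0 c =>
      rw [AlgHom.commutes, AlgHom.commutes]
      exact (Algebra.commutes c B).symm
    | grade1 x =>
      rcases x with i | ⟨l, σ⟩
      · have h := RopN_comm_Levi (i : ℕ) hB
        rw [← hXiT i] at h
        exact h
      · change B * (Xi (Xg m l σ)).unop = (Xi (Xg m l σ)).unop * B
        apply (matE r m).injective
        rw [map_mul, map_mul, hmat]
        have h := congrArg (matE r m) (opPerm_comm_Levi σ hB).eq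
        rw [map_mul, map_mul] at h
        exact Commute.mul_right h ((blockPres_Levi hB).commute_PM l)
    | mul x y hx hy =>
      rw [map_mul, map_mul, MulOpposite.unop_mul]
      exact hy.mul_right hx
    | add x y hx hy =>
      rw [map_add, map_add, MulOpposite.unop_add]
      exact hx.add_right hy
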